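/- There exist universal constants c, c' > 0 such that for all integers k ≥ 2 and n ≥ 1: if n ≥ k/log k then R*(k,n) ≥ c·(k/(n·log k))², and if n ≤ k/log k then R*(k,n) ≥ c'. -/

import Mathlib

open scoped BigOperators
open Real

noncomputable section

/-- The set of probability vectors on `Fin k`. -/
def probVec (k : ℕ) : Set (Fin k → ℝ) := {P | (∀ i, 0 ≤ P i) ∧ (∑ i, P i) = 1}

/-- Shannon entropy `H(P) = ∑ pᵢ log (1/pᵢ)` (natural log, `0·log(1/0) = 0`). -/
def entropy {k : ℕ} (P : Fin k → ℝ) : ℝ := ∑ i, P i * Real.log (1 / P i)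

/-- The multinomial probability mass function of the histogram `N` of `n` i.i.d. samples
from `P`. -/
def multinomialPMF {k : ℕ} (n : ℕ) (P : Fin k → ℝ) (N : Fin k → ℕ) : ℝ :=
  if (∑ i, N i) = n then
    (n.factorial : ℝ) / (∏ i, ((N i).factorial : ℝ)) * ∏ i, P i ^ (N i)
  else 0

/-- Mean squared error of the estimator `est` of the entropy, from the histogram of
`n` i.i.d. samples of `P`. -/
def mseIID {k : ℕ} (n : ℕ) (P : Fin k → ℝ) (est : (Fin k → ℕ) → ℝ) : ℝ :=
  ∑' N : Fin k → ℕ, multinomialPMF n P N * (est N - entropy P) ^ 2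

/-- The minimax quadratic risk `R*(k,n)` of entropy estimation. -/
def Rstar (k n : ℕ) : ℝ :=
  ⨅ est : (Fin k → ℕ) → ℝ, ⨆ P : probVec k, mseIID n P.1 est



lemma sum_eval_roots {N : ℕ} {ζ : ℂ} (hζ : IsPrimitiveRoot ζ N) (G : Polynomial ℂ)
    (hdeg : G.natDegree < N) (h0 : G.coeff 0 = 0) :
    ∑ j ∈ Finset.range N, G.eval (ζ ^ j) = 0 := by
  simp_rw [Polynomial.eval_eq_sum_range' hdeg]
  rw [Finset.sum_comm]
  apply Finset.sum_eq_zero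
  intro e he
  rw [← Finset.mul_sum]
  rcases Nat.eq_zero_or_pos e with rfl | hepos
  · simp [h0]
  · have hne : ζ ^ e ≠ 1 := hζ.pow_ne_one_of_pos_of_lt hepos.ne' (Finset.mem_range.1 he)
    have : ∑ i ∈ Finset.range N, (ζ ^ i) ^ e = 0 := by
      have h1 : ∀ i, (ζ ^ i) ^ e = (ζ ^ e) ^ i := fun i => by rw [← pow_mul, ← pow_mul, mul_comm]
      simp_rw [h1]
      rw [geom_sum_eq hne, ← pow_mul, mul_comm, pow_mul, hζ.pow_eq_one]
      simp
    rw [this, mul_zero]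

/-- The root of unity used for the nodes. -/
def nodeRoot (R : ℕ) : ℂ := Complex.exp (2 * π * Complex.I / ((4 * R : ℕ) : ℂ))

/-- Fejer weights. -/
def nodeK (R j : ℕ) : ℝ := ‖∑ r ∈ Finset.range R, (nodeRoot R ^ j) ^ r‖ ^ 2 / (R : ℝ) ^ 2

/-- nodes. -/
def nodeY (R j : ℕ) : ℝ := (R : ℝ) ^ 2 * ‖nodeRoot R ^ j - 1‖ ^ 2 / 4

lemma nodeRoot_prim {R : ℕ} (hR : 1 ≤ R) : IsPrimitiveRoot (nodeRoot R) (4 * R) :=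
  Complex.isPrimitiveRoot_exp (4 * R) (by omega)

lemma nodeRoot_norm {R : ℕ} (hR : 1 ≤ R) (j : ℕ) : ‖nodeRoot R ^ j‖ = 1 := by
  rw [norm_pow, (nodeRoot_prim hR).norm'_eq_one (by omega), one_pow]

lemma nodeRoot_half {R : ℕ} (hR : 1 ≤ R) : nodeRoot R ^ (2 * R) = -1 := by
  have h := nodeRoot_prim hR
  have h1 : (nodeRoot R ^ (2 * R)) ^ 2 = 1 := by
    rw [← pow_mul]; convert h.pow_eq_one using 2; ring
  have h2 : nodeRoot R ^ (2 * R) ≠ 1 := h.pow_ne_one_of_pos_of_lt (by omega) (by omega)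
  rcases mul_self_eq_one_iff.1 ((sq _).symm.trans h1) with h3 | h3
  · exact absurd h3 h2
  · exact h3

lemma node_term {R t : ℕ} (hR : 1 ≤ R) (ht : t ≤ R) (j : ℕ) :
    (((-1 : ℝ) ^ j * nodeK R j * nodeY R j ^ t : ℝ) : ℂ) =
      (1 / (R : ℂ) ^ 2 * ((R : ℂ) ^ 2 / 4) ^ t * (-1) ^ t) *
      ((nodeRoot R ^ j) ^ (R + 1 - t) * (∑ r ∈ Finset.range R, (nodeRoot R ^ j) ^ r) ^ 2 *
        (nodeRoot R ^ j - 1) ^ (2 * t)) := by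
  unfold nodeK nodeY
  set z := nodeRoot R ^ j with hz
  have hz1 : z * (starRingEnd ℂ) z = 1 := by
    rw [Complex.mul_conj, Complex.normSq_eq_norm_sq, hz, nodeRoot_norm hR]; simp
  set w := (starRingEnd ℂ) z with hw
  have hsign : ((-1 : ℂ)) ^ j = z ^ (2 * R) := by
    rw [hz, ← pow_mul, mul_comm, pow_mul, nodeRoot_half hR]
  have hD : ((‖∑ r ∈ Finset.range R, z ^ r‖ : ℂ)) ^ 2 =
      (∑ r ∈ Finset.range R, z ^ r) * (∑ r ∈ Finset.range R, w ^ r) := by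
    rw [← Complex.mul_conj']
    simp [hw]
  have hE : ((‖z - 1‖ : ℂ)) ^ 2 = (z - 1) * (w - 1) := by
    rw [← Complex.mul_conj']
    simp [hw]
  have hrev : (∑ r ∈ Finset.range R, w ^ r) * z ^ (R - 1) = ∑ r ∈ Finset.range R, z ^ r := by
    rw [← Finset.sum_range_reflect, Finset.sum_mul]
    apply Finset.sum_congr rfl
    intro r hr
    have hr' := Finset.mem_range.1 hr
    have : z ^ (R - 1) = z ^ (R - 1 - r) * z ^ r := by
      rw [← pow_add]; congr 1; omega
    rw [this, ← mul_assoc, ← mul_pow, mul_comm w z, hz1]; simp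
  have hzE : ((z - 1) * (w - 1)) * z = - (z - 1) ^ 2 := by
    linear_combination (z - 1) * hz1
  have hexp : z ^ (2 * R) = z ^ (R + 1 - t) * z ^ (R - 1) * z ^ t := by
    rw [← pow_add, ← pow_add]; congr 1; omega
  push_cast
  rw [hD, hsign, hexp, hE]
  have e1 : ((R : ℂ) ^ 2 * ((z - 1) * (w - 1)) / 4) ^ t * z ^ t =
      ((R : ℂ) ^ 2 / 4) ^ t * ((-1) ^ t * (z - 1) ^ (2 * t)) := by
    rw [pow_mul, ← mul_pow, ← mul_pow, ← mul_pow]; congr 1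
    linear_combination ((R : ℂ) ^ 2 / 4) * hzE
  calc _ = z ^ (R + 1 - t) * (((∑ r ∈ Finset.range R, w ^ r) * z ^ (R - 1)) *
        (∑ r ∈ Finset.range R, z ^ r) / (R : ℂ) ^ 2) *
        (((R : ℂ) ^ 2 * ((z - 1) * (w - 1)) / 4) ^ t * z ^ t) := by ring
    _ = _ := by rw [e1, hrev]; ring

lemma node_annih {R t : ℕ} (hR : 1 ≤ R) (ht : t ≤ R) :
    ∑ j ∈ Finset.range (4 * R), (-1 : ℝ) ^ j * nodeK R j * nodeY R j ^ t = 0 := by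
  have : ((∑ j ∈ Finset.range (4 * R), (-1 : ℝ) ^ j * nodeK R j * nodeY R j ^ t : ℝ) : ℂ) = 0 := by
    rw [Complex.ofReal_sum]
    rw [Finset.sum_congr rfl (fun j _ => node_term hR ht j), ← Finset.mul_sum]
    have key := sum_eval_roots (nodeRoot_prim hR)
      (Polynomial.X ^ (R + 1 - t) * (∑ r ∈ Finset.range R, Polynomial.X ^ r) ^ 2 *
        (Polynomial.X - 1) ^ (2 * t)) ?_ ?_
    · rw [Finset.sum_congr rfl (fun j _ => ?_), key, mul_zero]
      simp [Polynomial.eval_finsetSum]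
    · have h1 : (∑ r ∈ Finset.range R, (Polynomial.X : Polynomial ℂ) ^ r).natDegree ≤ R - 1 := by
        apply Polynomial.natDegree_sum_le_of_forall_le
        intro i hi
        have := Finset.mem_range.1 hi
        exact (Polynomial.natDegree_X_pow_le i).trans (by omega)
      have h2 : ((Polynomial.X - 1 : Polynomial ℂ) ^ (2 * t)).natDegree ≤ 2 * t * 1 := by
        apply Polynomial.natDegree_pow_le_of_le
        simpa using (Polynomial.natDegree_X_sub_C_le (1 : ℂ))
      have h3 := Polynomial.natDegree_pow_le_of_le 2 h1
      have h4 := Polynomial.natDegree_mul_le_of_le (Polynomial.natDegree_mul_le_of_le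
        (Polynomial.natDegree_X_pow_le (R := ℂ) (R + 1 - t)) h3) h2
      omega
    · have : R + 1 - t ≠ 0 := by omega
      simp [Polynomial.coeff_zero_eq_eval_zero, this]
  exact_mod_cast this

lemma nodeK_nonneg (R j : ℕ) : 0 ≤ nodeK R j := by unfold nodeK; positivity
lemma nodeY_nonneg (R j : ℕ) : 0 ≤ nodeY R j := by unfold nodeY; positivity

lemma nodeK_zero {R : ℕ} (hR : 1 ≤ R) : nodeK R 0 = 1 := by
  have : (R : ℝ) ≠ 0 := by positivity
  simp [nodeK, this]

lemma nodeY_zero (R : ℕ) : nodeY R 0 = 0 := by simp [nodeY]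

lemma nodeK_mul_nodeY {R : ℕ} (hR : 1 ≤ R) (j : ℕ) : nodeK R j * nodeY R j ≤ 1 := by
  unfold nodeK nodeY
  have hR' : (R : ℝ) ≠ 0 := by positivity
  set z := nodeRoot R ^ j with hz
  have h1 : ‖∑ r ∈ Finset.range R, z ^ r‖ * ‖z - 1‖ ≤ 2 := by
    rw [← norm_mul, geom_sum_mul]
    calc _ ≤ ‖z ^ R‖ + ‖(1 : ℂ)‖ := norm_sub_le _ _
      _ = 2 := by rw [norm_pow, hz, nodeRoot_norm hR]; norm_num
  have h0 : 0 ≤ ‖∑ r ∈ Finset.range R, z ^ r‖ * ‖z - 1‖ := by positivity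
  have h2 : (‖∑ r ∈ Finset.range R, z ^ r‖ * ‖z - 1‖) ^ 2 ≤ 2 ^ 2 := by gcongr
  have : ‖∑ r ∈ Finset.range R, z ^ r‖ ^ 2 / (R : ℝ) ^ 2 * ((R : ℝ) ^ 2 * ‖z - 1‖ ^ 2 / 4)
     = (‖∑ r ∈ Finset.range R, z ^ r‖ * ‖z - 1‖) ^ 2 / 4 := by
    field_simp
  rw [this]; linarith

lemma nodeY_le {R : ℕ} (hR : 1 ≤ R) (j : ℕ) : nodeY R j ≤ (R : ℝ) ^ 2 := by
  unfold nodeY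
  have h : ‖nodeRoot R ^ j - 1‖ ≤ 2 := by
    calc _ ≤ ‖nodeRoot R ^ j‖ + ‖(1 : ℂ)‖ := norm_sub_le _ _
      _ = 2 := by rw [nodeRoot_norm hR]; norm_num
  have : ‖nodeRoot R ^ j - 1‖ ^ 2 ≤ 2 ^ 2 := by gcongr
  nlinarith [sq_nonneg (R : ℝ)]

lemma nodeY_lower {R j : ℕ} (hR : 1 ≤ R) (hj : j ≤ 2 * R) : (j : ℝ) ^ 2 / 4 ≤ nodeY R j := by
  have hR' : (0 : ℝ) < R := by positivity
  have h1 : nodeRoot R ^ j = Complex.exp (Complex.I * ((2 * π * j / (4 * R) : ℝ) : ℂ)) := by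
    unfold nodeRoot
    rw [← Complex.exp_nat_mul]; congr 1; push_cast; ring
  have h2 : (j : ℝ) / (2 * R) ≤ Real.sin (2 * π * j / (4 * R) / 2) := by
    have hle : 2 * π * j / (4 * R) / 2 ≤ π / 2 := by
      have : (j : ℝ) ≤ 2 * R := by exact_mod_cast hj
      rw [div_div, div_le_div_iff₀ (by positivity) (by positivity)]
      nlinarith [Real.pi_pos]
    have := Real.mul_le_sin (by positivity) hle
    refine le_trans (le_of_eq ?_) this
    have := Real.pi_ne_zero
    field_simp; ring
  have h3 : ‖nodeRoot R ^ j - 1‖ = 2 * Real.sin (2 * π * j / (4 * R) / 2) := by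
    rw [h1, Complex.norm_exp_I_mul_ofReal_sub_one, Real.norm_eq_abs, abs_of_nonneg]
    have : 0 ≤ (j : ℝ) / (2 * R) := by positivity
    linarith
  unfold nodeY
  rw [h3]
  have : ((j : ℝ) / (2 * R)) ^ 2 ≤ (Real.sin (2 * π * j / (4 * R) / 2)) ^ 2 := by gcongr
  rw [div_pow, div_le_iff₀ (by positivity)] at this
  nlinarith

lemma nodeY_symm {R j : ℕ} (hR : 1 ≤ R) (hj : j ≤ 4 * R) : nodeY R (4 * R - j) = nodeY R j := by
  unfold nodeY
  congr 3
  have h : nodeRoot R ^ (4 * R - j) * nodeRoot R ^ j = 1 := by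
    rw [← pow_add, Nat.sub_add_cancel hj, (nodeRoot_prim hR).pow_eq_one]
  calc ‖nodeRoot R ^ (4 * R - j) - 1‖ = ‖nodeRoot R ^ (4 * R - j) - 1‖ * ‖nodeRoot R ^ j‖ := by
        rw [nodeRoot_norm hR, mul_one]
    _ = ‖1 - nodeRoot R ^ j‖ := by rw [← norm_mul, sub_mul, h, one_mul]
    _ = _ := norm_sub_rev _ _


/-- summable majorant -/
def majB (i : ℕ) : ℝ := 20 * ((i : ℝ) ^ 2 / 4) ^ (-(3 / 4) : ℝ)

lemma majB_nonneg (i : ℕ) : 0 ≤ majB i := by unfold majB; positivity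

lemma majB_summable : Summable majB := by
  have h : Summable (fun i : ℕ => (20 * (1 / 4 : ℝ) ^ (-(3 / 4) : ℝ)) * (1 / (i : ℝ) ^ (3 / 2 : ℝ))) :=
    (Real.summable_one_div_nat_rpow.2 (by norm_num)).mul_left _
  refine h.congr (fun i => ?_)
  unfold majB
  have hi : (0 : ℝ) ≤ i := by positivity
  rw [div_eq_mul_one_div ((i : ℝ) ^ 2) 4, Real.mul_rpow (by positivity) (by positivity),
    ← Real.rpow_natCast (i : ℝ) 2, ← Real.rpow_mul hi, one_div ((i : ℝ) ^ (3 / 2 : ℝ)), ← Real.rpow_neg hi]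
  norm_num
  ring

lemma log_bound {ε y : ℝ} (h0 : 0 < ε) (h1 : ε ≤ 1) (hy : 1 / 4 ≤ y) :
    |Real.log (ε + y)| ≤ 20 * y ^ (1 / 4 : ℝ) ∧ 1 ≤ 20 * y ^ (1 / 4 : ℝ) := by
  have hy0 : 0 < y := by linarith
  have hq : 1 / 4 ≤ y ^ (1 / 4 : ℝ) := by
    have a1 : (1 / 4 : ℝ) ^ (1 / 4 : ℝ) ≤ y ^ (1 / 4 : ℝ) := by gcongr
    have a2 : (1 / 4 : ℝ) ^ (1 : ℝ) ≤ (1 / 4 : ℝ) ^ (1 / 4 : ℝ) :=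
      Real.rpow_le_rpow_of_exponent_ge (by norm_num) (by norm_num) (by norm_num)
    rw [Real.rpow_one] at a2
    linarith
  refine ⟨abs_le.2 ⟨?_, ?_⟩, by linarith⟩
  · have : 1 - (ε + y)⁻¹ ≤ Real.log (ε + y) := Real.one_sub_inv_le_log_of_pos (by linarith)
    have h3 : (ε + y)⁻¹ ≤ 4 := by
      rw [inv_le_comm₀ (by linarith) (by norm_num)]; linarith
    linarith
  · have a1 : Real.log (ε + y) ≤ Real.log (5 * y) := Real.log_le_log (by linarith) (by linarith)
    have a2 : Real.log (5 * y) ≤ (5 * y) ^ (1 / 4 : ℝ) / (1 / 4) :=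
      Real.log_le_rpow_div (by positivity) (by norm_num)
    have a3 : (5 * y) ^ (1 / 4 : ℝ) = 5 ^ (1 / 4 : ℝ) * y ^ (1 / 4 : ℝ) :=
      Real.mul_rpow (by norm_num) hy0.le
    have a4 : (5 : ℝ) ^ (1 / 4 : ℝ) ≤ 5 ^ (1 : ℝ) :=
      Real.rpow_le_rpow_of_exponent_le (by norm_num) (by norm_num)
    rw [Real.rpow_one] at a4
    have a5 : (5 : ℝ) ^ (1 / 4 : ℝ) * y ^ (1 / 4 : ℝ) ≤ 5 * y ^ (1 / 4 : ℝ) := by gcongr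
    rw [a3] at a2
    linarith

lemma node_bound_aux {R j i : ℕ} {ε : ℝ} (hR : 1 ≤ R) (h0 : 0 < ε) (h1 : ε ≤ 1) (hi : 1 ≤ i)
    (hy : (i : ℝ) ^ 2 / 4 ≤ nodeY R j) :
    nodeK R j ≤ majB i ∧ nodeK R j * |Real.log (ε + nodeY R j)| ≤ majB i := by
  have hi' : (1 : ℝ) ≤ i := by exact_mod_cast hi
  set y := nodeY R j with hydef
  have hy4 : 1 / 4 ≤ y := by nlinarith
  have hy0 : 0 < y := by linarith
  obtain ⟨b1, b2⟩ := log_bound h0 h1 hy4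
  have hK : nodeK R j ≤ y⁻¹ := by
    rw [← one_div, le_div_iff₀ hy0]; exact nodeK_mul_nodeY hR j
  have hB : y⁻¹ * (20 * y ^ (1 / 4 : ℝ)) ≤ majB i := by
    unfold majB
    have : y⁻¹ * (20 * y ^ (1 / 4 : ℝ)) = 20 * y ^ (-(3 / 4) : ℝ) := by
      rw [← Real.rpow_neg_one, mul_left_comm, ← Real.rpow_add hy0]; norm_num
    rw [this]
    have := Real.rpow_le_rpow_of_nonpos (z := -(3 / 4)) (by positivity) hy (by norm_num)
    linarith
  have hK0 := nodeK_nonneg R j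
  constructor
  · calc nodeK R j ≤ y⁻¹ * 1 := by rw [mul_one]; exact hK
      _ ≤ y⁻¹ * (20 * y ^ (1 / 4 : ℝ)) := by gcongr
      _ ≤ _ := hB
  · calc nodeK R j * |Real.log (ε + y)| ≤ y⁻¹ * (20 * y ^ (1 / 4 : ℝ)) := by gcongr
      _ ≤ _ := hB

lemma node_bound {R j : ℕ} {ε : ℝ} (hR : 1 ≤ R) (h0 : 0 < ε) (h1 : ε ≤ 1) (hj : 1 ≤ j)
    (hj2 : j < 4 * R) :
    nodeK R j ≤ majB j + majB (4 * R - j) ∧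
    nodeK R j * |Real.log (ε + nodeY R j)| ≤ majB j + majB (4 * R - j) := by
  have m1 := majB_nonneg j
  have m2 := majB_nonneg (4 * R - j)
  rcases le_total j (2 * R) with h | h
  · have := node_bound_aux hR h0 h1 hj (nodeY_lower hR h)
    exact ⟨by linarith, by linarith⟩
  · have hl := nodeY_lower (j := 4 * R - j) hR (by omega)
    rw [nodeY_symm hR hj2.le] at hl
    have := node_bound_aux hR h0 h1 (by omega) hl
    exact ⟨by linarith, by linarith⟩

lemma node_sum_le {R : ℕ} (hR : 1 ≤ R) (f : ℕ → ℝ)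
    (hf : ∀ j, 1 ≤ j → j < 4 * R → f j ≤ majB j + majB (4 * R - j)) :
    ∑ j ∈ Finset.range (4 * R - 1), f (j + 1) ≤ 2 * ∑' i, majB i := by
  have h1 : ∑ j ∈ Finset.range (4 * R - 1), f (j + 1) ≤
      ∑ j ∈ Finset.range (4 * R - 1), (majB (j + 1) + majB (4 * R - 1 - 1 - j + 1)) := by
    apply Finset.sum_le_sum
    intro j hj
    have := Finset.mem_range.1 hj
    have h := hf (j + 1) (by omega) (by omega)
    have e : 4 * R - (j + 1) = 4 * R - 1 - 1 - j + 1 := by omega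
    rwa [e] at h
  have h2 : ∑ j ∈ Finset.range (4 * R - 1), majB (j + 1) ≤ ∑' i, majB i := by
    have : Summable (fun j => majB (j + 1)) := (summable_nat_add_iff 1).2 majB_summable
    calc _ ≤ ∑' j, majB (j + 1) := this.sum_le_tsum _ (fun i _ => majB_nonneg _)
      _ ≤ _ := by
        rw [majB_summable.tsum_eq_zero_add]
        linarith [majB_nonneg 0]
  rw [Finset.sum_add_distrib, Finset.sum_range_reflect (fun j => majB (j + 1))] at h1
  linarith

lemma moment_lemma : ∃ ε C : ℝ, 0 < ε ∧ ε ≤ 1 ∧ 1 ≤ C ∧ ∀ R : ℕ, 1 ≤ R →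
    (∑ j ∈ Finset.range (4 * R), nodeK R j ≤ C) ∧
    (∑ j ∈ Finset.range (4 * R), (-1 : ℝ) ^ j * nodeK R j * Real.log (ε + nodeY R j) ≤ -1) := by
  set B := 2 * ∑' i, majB i with hB
  have hB0 : 0 ≤ B := by
    have : 0 ≤ ∑' i, majB i := tsum_nonneg majB_nonneg
    positivity
  refine ⟨Real.exp (-(B + 1)), 1 + B, Real.exp_pos _, ?_, by linarith, ?_⟩
  · rw [Real.exp_le_one_iff]; linarith
  intro R hR
  have h1 : Real.exp (-(B + 1)) ≤ 1 := by rw [Real.exp_le_one_iff]; linarith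
  have e : 4 * R = (4 * R - 1) + 1 := by omega
  constructor
  · rw [e, Finset.sum_range_succ', nodeK_zero hR]
    have := node_sum_le hR (nodeK R) (fun j h2 h3 => (node_bound hR (Real.exp_pos _) h1 h2 h3).1)
    linarith
  · rw [e, Finset.sum_range_succ', nodeK_zero hR, nodeY_zero]
    have := node_sum_le hR (fun j => (-1 : ℝ) ^ j * nodeK R j * Real.log (Real.exp (-(B + 1)) + nodeY R j))
      (fun j h2 h3 => le_trans ?_ (node_bound hR (Real.exp_pos _) h1 h2 h3).2)
    · simp only [add_zero, Real.log_exp, pow_zero, one_mul]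
      linarith
    · refine (le_abs_self _).trans (le_of_eq ?_)
      rw [abs_mul, abs_mul, abs_pow]
      simp [abs_of_nonneg (nodeK_nonneg R j)]


/-- Atoms of the priors. -/
def atomT (ε : ℝ) (R : ℕ) : Option (Fin (4 * R)) → ℝ
  | none => 0
  | some j => ε + nodeY R j

/-- Weights of the prior attached to nonnegative weights `K`. -/
def atomW (ε W : ℝ) (R : ℕ) (K : Fin (4 * R) → ℝ) : Option (Fin (4 * R)) → ℝ
  | none => 1 - ∑ j, ε * K j / (W * (ε + nodeY R j))
  | some j => ε * K j / (W * (ε + nodeY R j))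

lemma atomW_sum_mul {ε W : ℝ} {R : ℕ} (K : Fin (4 * R) → ℝ) (hε : 0 < ε) (hW : 0 < W)
    (g : ℝ → ℝ) :
    ∑ j, atomW ε W R K j * (atomT ε R j * g (atomT ε R j)) =
      (ε / W) * ∑ j, K j * g (ε + nodeY R j) := by
  rw [Fintype.sum_option]
  simp only [atomW, atomT, zero_mul, mul_zero, zero_add]
  rw [Finset.mul_sum]
  apply Finset.sum_congr rfl
  intro j _
  have : ε + nodeY R j ≠ 0 := by
    have := nodeY_nonneg R j; linarith
  field_simp

lemma atomW_sum {ε W : ℝ} {R : ℕ} (K : Fin (4 * R) → ℝ) :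
    ∑ j, atomW ε W R K j = 1 := by
  rw [Fintype.sum_option]
  simp only [atomW]
  ring

lemma atomW_nonneg {ε W : ℝ} {R : ℕ} (K : Fin (4 * R) → ℝ) (hε : 0 < ε) (hW : 0 < W)
    (hK : ∀ j, 0 ≤ K j) (hKW : ∑ j, K j = W) (j) : 0 ≤ atomW ε W R K j := by
  rcases j with _ | j
  · simp only [atomW]
    have : ∑ j, ε * K j / (W * (ε + nodeY R j)) ≤ ∑ j, K j / W := by
      apply Finset.sum_le_sum
      intro j _
      have h0 := nodeY_nonneg R j
      have := hK j
      rw [div_le_div_iff₀ (by positivity) hW]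
      have : 0 ≤ K j * W * nodeY R j := by positivity
      nlinarith
    rw [← Finset.sum_div, hKW, div_self hW.ne'] at this
    linarith
  · simp only [atomW]
    have h0 := nodeY_nonneg R j
    have := hK j
    positivity

lemma atomW_second {ε W : ℝ} {R : ℕ} (hR : 1 ≤ R) (K : Fin (4 * R) → ℝ) (hε : 0 < ε) (hε1 : ε ≤ 1)
    (hW : 1 / 2 ≤ W) (hKW : ∑ j, K j = W) (hK : ∀ j : Fin (4 * R), K j ≤ nodeK R j) :
    ∑ j, atomW ε W R K j * atomT ε R j ^ 2 ≤ 9 * R := by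
  have h := atomW_sum_mul (R := R) K hε (by linarith : 0 < W) (fun x => x)
  simp_rw [← sq] at h
  rw [h]
  have h2 : ∑ j, K j * (ε + nodeY R j) ≤ ε * W + 4 * R := by
    simp_rw [mul_add, Finset.sum_add_distrib, ← Finset.sum_mul, hKW]
    have : ∑ j : Fin (4 * R), K j * nodeY R j ≤ ∑ j : Fin (4 * R), (1 : ℝ) := by
      apply Finset.sum_le_sum
      intro j _
      exact (mul_le_mul_of_nonneg_right (hK j) (nodeY_nonneg R j)).trans (nodeK_mul_nodeY hR j)
    simp at this
    linarith
  have hR' : (1 : ℝ) ≤ R := by exact_mod_cast hR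
  have hWp : 0 < W := by linarith
  calc ε / W * ∑ j, K j * (ε + nodeY R j) ≤ ε / W * (ε * W + 4 * R) := by gcongr
    _ = ε * ε + ε * (4 * R / W) := by field_simp
    _ ≤ 1 * 1 + 1 * (8 * R) := by
      have : 4 * R / W ≤ 8 * (R : ℝ) := by
        rw [div_le_iff₀ hWp]; nlinarith
      gcongr
    _ ≤ _ := by linarith

lemma prior_lemma : ∃ ε C : ℝ, 0 < ε ∧ ε ≤ 1 ∧ 1 ≤ C ∧ ∀ R : ℕ, 1 ≤ R →
    ∃ (p q τ : Option (Fin (4 * R)) → ℝ),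
      (∀ j, 0 ≤ p j) ∧ (∀ j, 0 ≤ q j) ∧ (∑ j, p j = 1) ∧ (∑ j, q j = 1) ∧
      (∀ j, τ j = 0 ∨ ε ≤ τ j) ∧ (∀ j, τ j ≤ ε + (R : ℝ) ^ 2) ∧
      (∑ j, p j * τ j = ε) ∧ (∑ j, q j * τ j = ε) ∧
      (∑ j, p j * τ j ^ 2 ≤ 9 * R) ∧ (∑ j, q j * τ j ^ 2 ≤ 9 * R) ∧
      (∀ t, t ≤ R + 1 → ∑ j, p j * τ j ^ t = ∑ j, q j * τ j ^ t) ∧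
      (ε / C ≤ ∑ j, p j * (τ j * Real.log (1 / τ j)) - ∑ j, q j * (τ j * Real.log (1 / τ j))) := by
  obtain ⟨ε, C, hε, hε1, hC, H⟩ := moment_lemma
  refine ⟨ε, C, hε, hε1, hC, ?_⟩
  intro R hR
  obtain ⟨H1, H2⟩ := H R hR
  set W := (∑ j ∈ Finset.range (4 * R), nodeK R j) / 2 with hWdef
  have hWlow : 1 / 2 ≤ W := by
    have : nodeK R 0 ≤ ∑ j ∈ Finset.range (4 * R), nodeK R j :=
      Finset.single_le_sum (f := nodeK R) (fun i _ => nodeK_nonneg R i) (Finset.mem_range.2 (by omega))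
    rw [nodeK_zero hR] at this
    linarith
  have hWp : 0 < W := by linarith
  set Kp : Fin (4 * R) → ℝ := fun j => nodeK R j * (1 + (-1) ^ (j : ℕ)) / 2 with hKp
  set Kq : Fin (4 * R) → ℝ := fun j => nodeK R j * (1 - (-1) ^ (j : ℕ)) / 2 with hKq
  have hsgn : ∀ j : ℕ, (-1 : ℝ) ^ j = 1 ∨ (-1 : ℝ) ^ j = -1 := neg_one_pow_eq_or ℝ
  have hKp0 : ∀ j, 0 ≤ Kp j := by
    intro j
    have := nodeK_nonneg R j
    rcases hsgn j with h | h <;> simp only [hKp, h] <;> linarith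
  have hKq0 : ∀ j, 0 ≤ Kq j := by
    intro j
    have := nodeK_nonneg R j
    rcases hsgn j with h | h <;> simp only [hKq, h] <;> linarith
  have hKp1 : ∀ j : Fin (4 * R), Kp j ≤ nodeK R j := by
    intro j
    have := nodeK_nonneg R j
    rcases hsgn j with h | h <;> simp only [hKp, h] <;> linarith
  have hKq1 : ∀ j : Fin (4 * R), Kq j ≤ nodeK R j := by
    intro j
    have := nodeK_nonneg R j
    rcases hsgn j with h | h <;> simp only [hKq, h] <;> linarith
  have hdiff : ∀ g : ℝ → ℝ, ∑ j, Kp j * g (ε + nodeY R j) - ∑ j, Kq j * g (ε + nodeY R j) =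
      ∑ j ∈ Finset.range (4 * R), (-1 : ℝ) ^ j * nodeK R j * g (ε + nodeY R j) := by
    intro g
    rw [Finset.sum_range, ← Finset.sum_sub_distrib]
    apply Finset.sum_congr rfl
    intro j _
    simp only [hKp, hKq]; ring
  have hsum : ∑ j, Kp j + ∑ j, Kq j = 2 * W := by
    rw [hWdef, Finset.sum_range, ← Finset.sum_add_distrib, mul_div_cancel₀ _ two_ne_zero]
    apply Finset.sum_congr rfl
    intro j _
    simp only [hKp, hKq]; ring
  have hmom : ∀ t, t ≤ R → ∑ j, Kp j * (ε + nodeY R j) ^ t = ∑ j, Kq j * (ε + nodeY R j) ^ t := by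
    intro t ht
    have := hdiff (fun x => x ^ t)
    rw [← sub_eq_zero, this]
    simp_rw [add_pow, Finset.mul_sum]
    rw [Finset.sum_comm]
    apply Finset.sum_eq_zero
    intro i hi
    have hi' := Finset.mem_range.1 hi
    have h3 := node_annih (t := t - i) hR (by omega)
    have : ∑ x ∈ Finset.range (4 * R), (-1 : ℝ) ^ x * nodeK R x * (ε ^ i * nodeY R x ^ (t - i) * (t.choose i : ℝ))
      = ε ^ i * (t.choose i : ℝ) * ∑ x ∈ Finset.range (4 * R), (-1 : ℝ) ^ x * nodeK R x * nodeY R x ^ (t - i) := by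
      rw [Finset.mul_sum]; apply Finset.sum_congr rfl; intro x _; ring
    rw [this, h3, mul_zero]
  have h0 := hmom 0 (by omega)
  simp only [pow_zero, mul_one] at h0
  have hKpW : ∑ j, Kp j = W := by linarith
  have hKqW : ∑ j, Kq j = W := by linarith
  refine ⟨atomW ε W R Kp, atomW ε W R Kq, atomT ε R, atomW_nonneg Kp hε hWp hKp0 hKpW,
    atomW_nonneg Kq hε hWp hKq0 hKqW, atomW_sum Kp, atomW_sum Kq, ?_, ?_, ?_, ?_,
    atomW_second hR Kp hε hε1 hWlow hKpW hKp1, atomW_second hR Kq hε hε1 hWlow hKqW hKq1, ?_, ?_⟩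
  · rintro (_ | j)
    · left; rfl
    · right
      have := nodeY_nonneg R j
      simp only [atomT]; linarith
  · rintro (_ | j)
    · simp only [atomT]; positivity
    · have := nodeY_le hR j
      simp only [atomT]; linarith
  · have := atomW_sum_mul (R := R) Kp hε hWp (fun _ => 1)
    simp only [mul_one] at this
    rw [this, hKpW]; field_simp
  · have := atomW_sum_mul (R := R) Kq hε hWp (fun _ => 1)
    simp only [mul_one] at this
    rw [this, hKqW]; field_simp
  · intro t ht
    rcases t with _ | t
    · simp only [pow_zero, mul_one, atomW_sum]
    · have a1 := atomW_sum_mul (R := R) Kp hε hWp (fun x => x ^ t)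
      have a2 := atomW_sum_mul (R := R) Kq hε hWp (fun x => x ^ t)
      simp only [← pow_succ'] at a1 a2
      rw [a1, a2, hmom t (by omega)]
  · have a1 := atomW_sum_mul (R := R) Kp hε hWp (fun x => Real.log (1 / x))
    have a2 := atomW_sum_mul (R := R) Kq hε hWp (fun x => Real.log (1 / x))
    rw [a1, a2, ← mul_sub]
    have a3 := hdiff (fun x => Real.log (1 / x))
    rw [a3]
    have a4 : ∑ j ∈ Finset.range (4 * R), (-1 : ℝ) ^ j * nodeK R j * Real.log (1 / (ε + nodeY R j)) =
        - ∑ j ∈ Finset.range (4 * R), (-1 : ℝ) ^ j * nodeK R j * Real.log (ε + nodeY R j) := by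
      rw [← Finset.sum_neg_distrib]
      apply Finset.sum_congr rfl
      intro j _
      rw [one_div, Real.log_inv]; ring
    rw [a4]
    have hWC : W ≤ C := by linarith
    calc ε / C ≤ ε / W := by gcongr
      _ = ε / W * 1 := by ring
      _ ≤ _ := by gcongr; linarith


lemma sum_cons {T : Type*} [Fintype T] {m : ℕ} (F : (Fin (m + 1) → T) → ℝ) :
    ∑ θ, F θ = ∑ a : T, ∑ θ : Fin m → T, F (Fin.cons a θ) := by
  rw [← (Fin.consEquiv (fun _ : Fin (m + 1) => T)).sum_comp, Fintype.sum_prod_type]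
  rfl

lemma sum_pi_prod {T : Type*} [Fintype T] {k : ℕ} (f : Fin k → T → ℝ) :
    ∑ θ : Fin k → T, ∏ i, f i (θ i) = ∏ i, ∑ t, f i t := by
  rw [Finset.prod_univ_sum, Fintype.piFinset_univ]

lemma sum_pi_one {T : Type*} [Fintype T] {m : ℕ} (p : T → ℝ) (hp : ∑ j, p j = 1) :
    ∑ θ : Fin m → T, ∏ i, p (θ i) = 1 := by
  rw [sum_pi_prod (fun _ => p)]; simp [hp]

lemma mean_pi {T : Type*} [Fintype T] {m : ℕ} (p g : T → ℝ) (hp : ∑ j, p j = 1)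
    (hg : ∑ j, p j * g j = 0) :
    ∑ θ : Fin m → T, (∏ i, p (θ i)) * (∑ i, g (θ i)) = 0 := by
  induction m with
  | zero => simp
  | succ m ih =>
    rw [sum_cons]
    simp only [Fin.prod_univ_succ, Fin.sum_univ_succ, Fin.cons_zero, Fin.cons_succ]
    have : ∀ a, ∑ θ : Fin m → T, p a * (∏ i, p (θ i)) * (g a + ∑ i, g (θ i)) = p a * g a := by
      intro a
      calc _ = p a * g a * (∑ θ : Fin m → T, ∏ i, p (θ i)) +
          p a * ∑ θ : Fin m → T, (∏ i, p (θ i)) * (∑ i, g (θ i)) := by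
            rw [Finset.mul_sum, Finset.mul_sum, ← Finset.sum_add_distrib]
            exact Finset.sum_congr rfl (fun _ _ => by ring)
        _ = _ := by rw [ih, sum_pi_one p hp]; ring
    simp_rw [this]
    exact hg

lemma var_pi {T : Type*} [Fintype T] {m : ℕ} (p g : T → ℝ) (hp : ∑ j, p j = 1)
    (hg : ∑ j, p j * g j = 0) :
    ∑ θ : Fin m → T, (∏ i, p (θ i)) * (∑ i, g (θ i)) ^ 2 = m * ∑ j, p j * g j ^ 2 := by
  induction m with
  | zero => simp
  | succ m ih =>
    rw [sum_cons]
    simp only [Fin.prod_univ_succ, Fin.sum_univ_succ, Fin.cons_zero, Fin.cons_succ]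
    have : ∀ a, ∑ θ : Fin m → T, p a * (∏ i, p (θ i)) * (g a + ∑ i, g (θ i)) ^ 2 =
        p a * g a ^ 2 + p a * (m * ∑ j, p j * g j ^ 2) := by
      intro a
      calc _ = p a * g a ^ 2 * (∑ θ : Fin m → T, ∏ i, p (θ i)) +
          2 * p a * g a * (∑ θ : Fin m → T, (∏ i, p (θ i)) * (∑ i, g (θ i))) +
          p a * ∑ θ : Fin m → T, (∏ i, p (θ i)) * (∑ i, g (θ i)) ^ 2 := by
            rw [Finset.mul_sum, Finset.mul_sum, Finset.mul_sum, ← Finset.sum_add_distrib,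
              ← Finset.sum_add_distrib]
            exact Finset.sum_congr rfl (fun _ _ => by ring)
        _ = _ := by rw [ih, sum_pi_one p hp, mean_pi p g hp hg]; ring
    simp_rw [this]
    rw [Finset.sum_add_distrib, ← Finset.sum_mul, hp]
    push_cast; ring

/-- Variance bound for sums of iid, not centered. -/
lemma var_pi_le {T : Type*} [Fintype T] {m : ℕ} (p g : T → ℝ) (hp : ∑ j, p j = 1)
    (μ : ℝ) (hg : ∑ j, p j * g j = μ) :
    ∑ θ : Fin m → T, (∏ i, p (θ i)) * (∑ i, g (θ i) - m * μ) ^ 2 ≤ m * ∑ j, p j * g j ^ 2 := by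
  have h0 : ∑ j, p j * (g j - μ) = 0 := by
    simp_rw [mul_sub, Finset.sum_sub_distrib, ← Finset.sum_mul]
    rw [hg, hp]; ring
  have h1 := var_pi (m := m) p (fun j => g j - μ) hp h0
  have h2 : ∑ j, p j * (g j - μ) ^ 2 = ∑ j, p j * g j ^ 2 - μ ^ 2 := by
    calc _ = ∑ j, p j * g j ^ 2 - 2 * μ * ∑ j, p j * g j + μ ^ 2 * ∑ j, p j := by
          rw [Finset.mul_sum, Finset.mul_sum, ← Finset.sum_sub_distrib, ← Finset.sum_add_distrib]
          exact Finset.sum_congr rfl (fun _ _ => by ring)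
      _ = _ := by rw [hg, hp]; ring
  simp only [Finset.sum_sub_distrib, Finset.sum_const, Finset.card_univ, Fintype.card_fin,
    nsmul_eq_mul] at h1
  rw [h1, h2]
  have : 0 ≤ (m : ℝ) * μ ^ 2 := by positivity
  linarith

lemma tv_prod {T : Type*} [Fintype T] {k : ℕ} (g h : Fin k → T → ℝ) (hg : ∀ i t, 0 ≤ g i t)
    (hh : ∀ i t, 0 ≤ h i t) (hg1 : ∀ i, ∑ t, g i t ≤ 1) (hh1 : ∀ i, ∑ t, h i t ≤ 1) :
    ∑ N : Fin k → T, |∏ i, g i (N i) - ∏ i, h i (N i)| ≤ ∑ i, ∑ t, |g i t - h i t| := by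
  induction k with
  | zero => simp
  | succ k ih =>
    rw [sum_cons]
    simp only [Fin.prod_univ_succ, Fin.sum_univ_succ, Fin.cons_zero, Fin.cons_succ]
    have ih' := ih (fun i => g i.succ) (fun i => h i.succ) (fun i => hg _) (fun i => hh _)
      (fun i => hg1 _) (fun i => hh1 _)
    have hP : ∑ N : Fin k → T, ∏ i, h i.succ (N i) ≤ 1 := by
      rw [sum_pi_prod (fun i => h i.succ)]
      exact Finset.prod_le_one (fun i _ => Finset.sum_nonneg (fun t _ => hh _ t)) (fun i _ => hh1 _)
    calc _ ≤ ∑ a : T, ∑ N : Fin k → T, (g 0 a * |∏ i, g i.succ (N i) - ∏ i, h i.succ (N i)| +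
          |g 0 a - h 0 a| * ∏ i, h i.succ (N i)) := by
          apply Finset.sum_le_sum; intro a _
          apply Finset.sum_le_sum; intro N _
          have hpos : 0 ≤ ∏ i, h i.succ (N i) := Finset.prod_nonneg (fun i _ => hh _ _)
          have e : g 0 a * ∏ i, g i.succ (N i) - h 0 a * ∏ i, h i.succ (N i) =
            g 0 a * (∏ i, g i.succ (N i) - ∏ i, h i.succ (N i)) +
            (g 0 a - h 0 a) * ∏ i, h i.succ (N i) := by ring
          rw [e]
          refine (abs_add_le _ _).trans (le_of_eq ?_)
          rw [abs_mul, abs_mul, abs_of_nonneg (hg 0 a), abs_of_nonneg hpos]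
      _ = (∑ a, g 0 a) * (∑ N : Fin k → T, |∏ i, g i.succ (N i) - ∏ i, h i.succ (N i)|) +
          (∑ a, |g 0 a - h 0 a|) * (∑ N : Fin k → T, ∏ i, h i.succ (N i)) := by
          simp_rw [Finset.sum_add_distrib, ← Finset.mul_sum, ← Finset.sum_mul]
      _ ≤ 1 * (∑ N : Fin k → T, |∏ i, g i.succ (N i) - ∏ i, h i.succ (N i)|) +
          (∑ a, |g 0 a - h 0 a|) * 1 := by
          have : 0 ≤ ∑ a, |g 0 a - h 0 a| := Finset.sum_nonneg (fun _ _ => abs_nonneg _)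
          gcongr
          exact hg1 0
      _ ≤ _ := by linarith

lemma antidiag_sum_le {k n : ℕ} (F : (Fin k → ℕ) → ℝ) (hF : ∀ N, 0 ≤ F N) :
    ∑ N ∈ Finset.piAntidiag Finset.univ n, F N ≤
      ∑ N : Fin k → Fin (n + 1), F (fun i => (N i : ℕ)) := by
  classical
  have hinj : Function.Injective (fun (N : Fin k → Fin (n + 1)) (i : Fin k) => (N i : ℕ)) := by
    intro a b hab
    funext i
    exact Fin.ext (congrFun hab i)
  rw [← Finset.sum_image (s := Finset.univ)
    (g := fun (N : Fin k → Fin (n + 1)) (i : Fin k) => (N i : ℕ)) (f := F) hinj.injOn]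
  apply Finset.sum_le_sum_of_subset_of_nonneg
  · intro N hN
    rw [Finset.mem_piAntidiag] at hN
    rw [Finset.mem_image]
    refine ⟨fun i => ⟨N i, ?_⟩, Finset.mem_univ _, rfl⟩
    have : N i ≤ ∑ i, N i := Finset.single_le_sum (fun _ _ => Nat.zero_le _) (Finset.mem_univ i)
    have h' : ∑ i, N i = n := hN.1
    omega
  · intro N _ _; exact hF N

/-- Two-prior Le Cam lemma. -/
lemma lecam {Θ ι : Type*} [Fintype Θ] (S : Finset ι) (f : Θ → ι → ℝ) (hf : ∀ θ, ∀ N ∈ S, 0 ≤ f θ N)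
    (hf1 : ∀ θ, ∑ N ∈ S, f θ N = 1)
    (H : Θ → ℝ) (est : ι → ℝ) (a b : Θ → ℝ) (ha : ∀ θ, 0 ≤ a θ) (hb : ∀ θ, 0 ≤ b θ)
    (h1 h2 r Va Vb D : ℝ) (hr : ∀ θ, ∑ N ∈ S, f θ N * (est N - H θ) ^ 2 ≤ r)
    (ha1 : ∑ θ, a θ ≤ 1) (hb1 : ∑ θ, b θ ≤ 1) (ha2 : 1 / 2 ≤ ∑ θ, a θ)
    (hr0 : 0 ≤ r)
    (hVa : ∑ θ, a θ * (H θ - h1) ^ 2 ≤ Va) (hVb : ∑ θ, b θ * (H θ - h2) ^ 2 ≤ Vb)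
    (hD : ∑ N ∈ S, |∑ θ, a θ * f θ N - ∑ θ, b θ * f θ N| ≤ D) (hD4 : D ≤ 1 / 4) :
    (h1 - h2) ^ 2 / 4 ≤ 8 * r + 4 * (Va + Vb) := by
  have main : ∀ (c : Θ → ℝ) (_ : ∀ θ, 0 ≤ c θ) (_ : ∑ θ, c θ ≤ 1) (h V : ℝ)
      (_ : ∑ θ, c θ * (H θ - h) ^ 2 ≤ V),
      ∑ N ∈ S, (∑ θ, c θ * f θ N) * (est N - h) ^ 2 ≤ 2 * r + 2 * V := by
    intro c hc hc1 h V hV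
    calc ∑ N ∈ S, (∑ θ, c θ * f θ N) * (est N - h) ^ 2
        = ∑ θ, c θ * ∑ N ∈ S, f θ N * (est N - h) ^ 2 := by
          simp_rw [Finset.sum_mul, Finset.mul_sum]
          rw [Finset.sum_comm]
          exact Finset.sum_congr rfl (fun _ _ => Finset.sum_congr rfl (fun _ _ => by ring))
      _ ≤ ∑ θ, c θ * (2 * r + 2 * (H θ - h) ^ 2) := by
          apply Finset.sum_le_sum; intro θ _
          refine mul_le_mul_of_nonneg_left ?_ (hc θ)
          calc ∑ N ∈ S, f θ N * (est N - h) ^ 2 ≤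
              ∑ N ∈ S, (2 * (f θ N * (est N - H θ) ^ 2) + f θ N * (2 * (H θ - h) ^ 2)) := by
                apply Finset.sum_le_sum; intro N hN
                have := hf θ N hN
                have e : (est N - h) ^ 2 ≤ 2 * (est N - H θ) ^ 2 + 2 * (H θ - h) ^ 2 := by
                  nlinarith [sq_nonneg (est N - H θ - (H θ - h))]
                nlinarith
            _ = 2 * (∑ N ∈ S, f θ N * (est N - H θ) ^ 2) + 2 * (H θ - h) ^ 2 := by
                rw [Finset.sum_add_distrib, ← Finset.mul_sum, ← Finset.sum_mul, hf1, one_mul]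
            _ ≤ _ := by linarith [hr θ]
      _ = (∑ θ, c θ) * (2 * r) + 2 * ∑ θ, c θ * (H θ - h) ^ 2 := by
          rw [Finset.sum_mul, Finset.mul_sum, ← Finset.sum_add_distrib]
          exact Finset.sum_congr rfl (fun _ _ => by ring)
      _ ≤ _ := by nlinarith
  have mA := main a ha ha1 h1 Va hVa
  have mB := main b hb hb1 h2 Vb hVb
  have hA : ∑ N ∈ S, ∑ θ, a θ * f θ N = ∑ θ, a θ := by
    rw [Finset.sum_comm]
    simp_rw [← Finset.mul_sum, hf1, mul_one]
  have key : ∑ N ∈ S, ((∑ θ, a θ * f θ N) - |∑ θ, a θ * f θ N - ∑ θ, b θ * f θ N|) * (h1 - h2) ^ 2 ≤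
      ∑ N ∈ S, (2 * ((∑ θ, a θ * f θ N) * (est N - h1) ^ 2) +
        2 * ((∑ θ, b θ * f θ N) * (est N - h2) ^ 2)) := by
    apply Finset.sum_le_sum; intro N hN
    have hA0 : 0 ≤ ∑ θ, a θ * f θ N := Finset.sum_nonneg (fun θ _ => mul_nonneg (ha θ) (hf θ N hN))
    have hB0 : 0 ≤ ∑ θ, b θ * f θ N := Finset.sum_nonneg (fun θ _ => mul_nonneg (hb θ) (hf θ N hN))
    set A := ∑ θ, a θ * f θ N
    set B := ∑ θ, b θ * f θ N
    have e1 : A - |A - B| ≤ A := by linarith [abs_nonneg (A - B)]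
    have e2 : A - |A - B| ≤ B := by linarith [le_abs_self (A - B)]
    have e3 : (h1 - h2) ^ 2 ≤ 2 * (est N - h1) ^ 2 + 2 * (est N - h2) ^ 2 := by
      nlinarith [sq_nonneg ((est N - h1) + (est N - h2))]
    by_cases hneg : A - |A - B| ≤ 0
    · have : (A - |A - B|) * (h1 - h2) ^ 2 ≤ 0 := mul_nonpos_of_nonpos_of_nonneg hneg (sq_nonneg _)
      have : 0 ≤ A * (est N - h1) ^ 2 := by positivity
      have : 0 ≤ B * (est N - h2) ^ 2 := by positivity
      linarith
    · push Not at hneg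
      have f1 := mul_le_mul_of_nonneg_left e3 hneg.le
      have f2 := mul_le_mul_of_nonneg_right e1 (sq_nonneg (est N - h1))
      have f3 := mul_le_mul_of_nonneg_right e2 (sq_nonneg (est N - h2))
      linarith
  rw [← Finset.sum_mul, Finset.sum_sub_distrib, hA, Finset.sum_add_distrib, ← Finset.mul_sum,
    ← Finset.mul_sum] at key
  have : 1 / 4 * (h1 - h2) ^ 2 ≤
    (∑ θ, a θ - ∑ N ∈ S, |∑ θ, a θ * f θ N - ∑ θ, b θ * f θ N|) * (h1 - h2) ^ 2 := by
    apply mul_le_mul_of_nonneg_right _ (sq_nonneg _)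
    linarith
  linarith


lemma multinomialPMF_nonneg {k n : ℕ} {P : Fin k → ℝ} (hP : ∀ i, 0 ≤ P i) (N : Fin k → ℕ) :
    0 ≤ multinomialPMF n P N := by
  unfold multinomialPMF
  split_ifs
  · have : 0 ≤ ∏ i, P i ^ N i := Finset.prod_nonneg (fun i _ => pow_nonneg (hP i) _)
    positivity
  · exact le_rfl

lemma multinomialPMF_eq {k n : ℕ} {P : Fin k → ℝ} {N : Fin k → ℕ}
    (hN : N ∈ Finset.piAntidiag Finset.univ n) :
    multinomialPMF n P N = (n.factorial : ℝ) / (∏ i, ((N i).factorial : ℝ)) * ∏ i, P i ^ (N i) := by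
  unfold multinomialPMF
  rw [if_pos (Finset.mem_piAntidiag.1 hN).1]

lemma mse_eq {k : ℕ} (n : ℕ) (P : Fin k → ℝ) (est : (Fin k → ℕ) → ℝ) :
    mseIID n P est = ∑ N ∈ Finset.piAntidiag Finset.univ n,
      multinomialPMF n P N * (est N - entropy P) ^ 2 := by
  unfold mseIID
  apply tsum_eq_sum
  intro N hN
  unfold multinomialPMF
  rw [if_neg, zero_mul]
  intro h
  exact hN (Finset.mem_piAntidiag.2 ⟨h, fun i _ => Finset.mem_univ i⟩)

lemma pmf_sum {k : ℕ} (n : ℕ) (P : Fin k → ℝ) :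
    ∑ N ∈ Finset.piAntidiag Finset.univ n, multinomialPMF n P N = (∑ i, P i) ^ n := by
  rw [Finset.sum_pow_eq_sum_piAntidiag]
  apply Finset.sum_congr rfl
  intro N hN
  rw [multinomialPMF_eq hN]
  congr 1
  have h := Nat.multinomial_spec (Finset.univ : Finset (Fin k)) N
  rw [show Finset.univ.sum N = n from (Finset.mem_piAntidiag.1 hN).1] at h
  have hne : (∏ i, ((N i).factorial : ℝ)) ≠ 0 :=
    Finset.prod_ne_zero_iff.2 (fun i _ => by positivity)
  rw [div_eq_iff hne, mul_comm]
  exact_mod_cast h.symm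

lemma probVec_le_one {k : ℕ} {P : Fin k → ℝ} (hP : P ∈ probVec k) (i : Fin k) : P i ≤ 1 := by
  rw [← hP.2]
  exact Finset.single_le_sum (fun j _ => hP.1 j) (Finset.mem_univ i)

lemma phi_bounds {x : ℝ} (h0 : 0 ≤ x) (h1 : x ≤ 1) :
    0 ≤ x * Real.log (1 / x) ∧ x * Real.log (1 / x) ≤ 1 := by
  rcases h0.eq_or_lt with rfl | hx
  · simp
  constructor
  · apply mul_nonneg h0
    apply Real.log_nonneg
    rw [le_div_iff₀ hx]; linarith
  · have : Real.log (1 / x) ≤ 1 / x - 1 := Real.log_le_sub_one_of_pos (by positivity)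
    calc x * Real.log (1 / x) ≤ x * (1 / x - 1) := by gcongr
      _ = 1 - x := by field_simp
      _ ≤ 1 := by linarith

lemma mse_bdd {k : ℕ} (n : ℕ) (est : (Fin k → ℕ) → ℝ) :
    BddAbove (Set.range (fun P : probVec k => mseIID n P.1 est)) := by
  refine ⟨∑ N ∈ Finset.piAntidiag Finset.univ n, (n.factorial : ℝ) * (|est N| + k) ^ 2, ?_⟩
  rintro _ ⟨⟨P, hP⟩, rfl⟩
  simp only
  rw [mse_eq]
  apply Finset.sum_le_sum
  intro N hN
  have h1 : multinomialPMF n P N ≤ n.factorial := by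
    rw [multinomialPMF_eq hN]
    have a : ∏ i, P i ^ N i ≤ 1 := Finset.prod_le_one (fun i _ => pow_nonneg (hP.1 i) _)
      (fun i _ => pow_le_one₀ (hP.1 i) (probVec_le_one hP i))
    have a0 : 0 ≤ ∏ i, P i ^ N i := Finset.prod_nonneg (fun i _ => pow_nonneg (hP.1 i) _)
    have b : (1 : ℝ) ≤ ∏ i, ((N i).factorial : ℝ) := by
      have : 1 ≤ ∏ i, (N i).factorial := Finset.one_le_prod' (fun i _ => Nat.factorial_pos _)
      exact_mod_cast this
    calc _ ≤ (n.factorial : ℝ) / 1 * 1 := by gcongr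
      _ = _ := by ring
  have h2 : |est N - entropy P| ≤ |est N| + k := by
    refine (abs_sub _ _).trans ?_
    have : |entropy P| ≤ k := by
      unfold entropy
      have hb := fun i => phi_bounds (hP.1 i) (probVec_le_one hP i)
      rw [abs_of_nonneg (Finset.sum_nonneg (fun i _ => (hb i).1))]
      calc _ ≤ ∑ i : Fin k, (1 : ℝ) := Finset.sum_le_sum (fun i _ => (hb i).2)
        _ = k := by simp
    linarith
  have h3 : (est N - entropy P) ^ 2 ≤ (|est N| + k) ^ 2 := by
    rw [← sq_abs (est N - entropy P)]; gcongr
  exact mul_le_mul h1 h3 (sq_nonneg _) (by positivity)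

lemma Rstar_lower {k n : ℕ} {r : ℝ}
    (h : ∀ est : (Fin k → ℕ) → ℝ, ∃ P ∈ probVec k, r ≤ mseIID n P est) : r ≤ Rstar k n := by
  unfold Rstar
  apply le_ciInf
  intro est
  obtain ⟨P, hP, hr⟩ := h est
  exact hr.trans (le_ciSup (mse_bdd n est) ⟨P, hP⟩)

lemma two_point {k n : ℕ} {P Q : Fin k → ℝ} (hP : P ∈ probVec k) (hQ : Q ∈ probVec k)
    (est : (Fin k → ℕ) → ℝ) :
    (∑ i, √(P i * Q i)) ^ n * |entropy P - entropy Q| ≤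
      √(mseIID n P est) + √(mseIID n Q est) := by
  set S := (Finset.piAntidiag Finset.univ n : Finset (Fin k → ℕ)) with hS
  have hsq : ∀ N ∈ S, multinomialPMF n (fun i => √(P i * Q i)) N =
      √(multinomialPMF n P N) * √(multinomialPMF n Q N) := by
    intro N hN
    rw [← Real.sqrt_mul (multinomialPMF_nonneg hP.1 N)]
    symm
    rw [Real.sqrt_eq_iff_mul_self_eq
      (mul_nonneg (multinomialPMF_nonneg hP.1 N) (multinomialPMF_nonneg hQ.1 N))
      (multinomialPMF_nonneg (fun i => Real.sqrt_nonneg _) N)]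
    rw [multinomialPMF_eq hN, multinomialPMF_eq hN, multinomialPMF_eq hN]
    have : (∏ i, √(P i * Q i) ^ N i) * (∏ i, √(P i * Q i) ^ N i) =
        (∏ i, P i ^ N i) * (∏ i, Q i ^ N i) := by
      rw [← Finset.prod_mul_distrib, ← Finset.prod_mul_distrib]
      apply Finset.prod_congr rfl
      intro i _
      rw [← mul_pow, ← mul_pow, Real.mul_self_sqrt (mul_nonneg (hP.1 i) (hQ.1 i))]
    linear_combination -((n.factorial : ℝ) / (∏ i, ((N i).factorial : ℝ))) ^ 2 * this
  rw [← pmf_sum, Finset.sum_mul]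
  have cs : ∀ A B : Fin k → ℝ, A ∈ probVec k → B ∈ probVec k → ∀ h : ℝ,
      ∑ N ∈ S, √(multinomialPMF n A N) * |est N - h| * √(multinomialPMF n B N) ≤
      √(∑ N ∈ S, multinomialPMF n A N * (est N - h) ^ 2) := by
    intro A B hA hB h
    apply Real.le_sqrt_of_sq_le
    refine (Finset.sum_mul_sq_le_sq_mul_sq _ _ _).trans (le_of_eq ?_)
    have e1 : ∑ N ∈ S, √(multinomialPMF n B N) ^ 2 = 1 := by
      rw [Finset.sum_congr rfl (fun N _ => Real.sq_sqrt (multinomialPMF_nonneg hB.1 N)), pmf_sum,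
        hB.2, one_pow]
    rw [e1, mul_one]
    apply Finset.sum_congr rfl
    intro N _
    rw [mul_pow, Real.sq_sqrt (multinomialPMF_nonneg hA.1 N), sq_abs]
  rw [mse_eq, mse_eq]
  refine le_trans ?_ (add_le_add (cs P Q hP hQ (entropy P)) (cs Q P hQ hP (entropy Q)))
  rw [← Finset.sum_add_distrib]
  apply Finset.sum_le_sum
  intro N hN
  rw [hsq N hN]
  have : |entropy P - entropy Q| ≤ |est N - entropy P| + |est N - entropy Q| := by
    have := abs_sub_le (entropy P) (est N) (entropy Q)
    rw [abs_sub_comm (entropy P) (est N)] at this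
    exact this
  calc _ ≤ √(multinomialPMF n P N) * √(multinomialPMF n Q N) *
        (|est N - entropy P| + |est N - entropy Q|) := by gcongr
    _ = _ := by ring

/-- Two-atom vector. -/
def binVec (m : ℕ) (x : ℝ) : Fin (m + 2) → ℝ := Fin.cons x (Fin.cons (1 - x) (fun _ => 0))

lemma binVec_mem {m : ℕ} {x : ℝ} (h0 : 0 ≤ x) (h1 : x ≤ 1) : binVec m x ∈ probVec (m + 2) := by
  constructor
  · intro i
    refine Fin.cases ?_ (fun i => ?_) i
    · simpa [binVec] using h0
    · refine Fin.cases ?_ (fun i => ?_) i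
      · simpa [binVec] using h1
      · simp [binVec]
  · simp [binVec, Fin.sum_univ_succ]

lemma binVec_entropy {m : ℕ} {x : ℝ} : entropy (binVec m x) =
    x * Real.log (1 / x) + (1 - x) * Real.log (1 / (1 - x)) := by
  unfold entropy
  rw [Fin.sum_univ_succ, Fin.sum_univ_succ]
  simp [binVec]

lemma gibbs_aux {p q : ℝ} (hp : 0 < p) (hq : 0 < q) :
    p * Real.log (1 / p) ≤ p * Real.log (1 / q) + (q - p) := by
  have h : Real.log (q / p) ≤ q / p - 1 := Real.log_le_sub_one_of_pos (by positivity)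
  have h2 : p * Real.log (q / p) ≤ p * (q / p - 1) := by gcongr
  rw [Real.log_div hq.ne' hp.ne'] at h2
  have : p * (q / p - 1) = q - p := by field_simp
  rw [one_div, one_div, Real.log_inv, Real.log_inv]
  linarith

lemma Rstar_inv_n {k n : ℕ} (hk : 2 ≤ k) (hn : 1 ≤ n) : 1 / (6400 * (n : ℝ)) ≤ Rstar k n := by
  obtain ⟨m, rfl⟩ : ∃ m, k = m + 2 := ⟨k - 2, by omega⟩
  have hn' : (1 : ℝ) ≤ n := by exact_mod_cast hn
  have hs : 1 ≤ √(n : ℝ) := by rwa [Real.one_le_sqrt]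
  have hs2 : √(n : ℝ) ^ 2 = n := Real.sq_sqrt (by linarith)
  set δ := 1 / (8 * √(n : ℝ)) with hδ
  have hδ0 : 0 < δ := by positivity
  have hδ1 : δ ≤ 1 / 8 := by
    rw [hδ]; apply one_div_le_one_div_of_le <;> linarith
  have hδn : n * δ ^ 2 = 1 / 64 := by
    rw [hδ, div_pow, mul_pow, hs2]; field_simp; norm_num
  have hP : binVec m (1 / 4) ∈ probVec (m + 2) := binVec_mem (by norm_num) (by norm_num)
  have hQ : binVec m (1 / 4 + δ) ∈ probVec (m + 2) := binVec_mem (by linarith) (by linarith)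
  apply Rstar_lower
  intro est
  by_contra hcon
  push Not at hcon
  have m1 := hcon _ hP
  have m2 := hcon _ hQ
  have tp := two_point (n := n) hP hQ est
  have hs3 : √(1 / (6400 * (n : ℝ))) = δ / 10 := by
    rw [Real.sqrt_eq_iff_mul_self_eq (by positivity) (by positivity), hδ]
    field_simp
    rw [hs2]; ring
  have s1 := Real.sqrt_lt_sqrt (by rw [mse_eq]; exact Finset.sum_nonneg (fun N _ =>
    mul_nonneg (multinomialPMF_nonneg hP.1 N) (sq_nonneg _))) m1
  have s2 := Real.sqrt_lt_sqrt (by rw [mse_eq]; exact Finset.sum_nonneg (fun N _ =>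
    mul_nonneg (multinomialPMF_nonneg hQ.1 N) (sq_nonneg _))) m2
  rw [hs3] at s1 s2
  have bc : 1 - 2 * δ ^ 2 ≤ ∑ i, √(binVec m (1 / 4) i * binVec m (1 / 4 + δ) i) := by
    rw [Fin.sum_univ_succ, Fin.sum_univ_succ]
    simp only [binVec, Fin.cons_zero, Fin.cons_succ, mul_zero, Real.sqrt_zero, Finset.sum_const_zero,
      add_zero]
    have a1 : 1 / 4 + δ / 2 - δ ^ 2 ≤ √(1 / 4 * (1 / 4 + δ)) := by
      apply Real.le_sqrt_of_sq_le
      nlinarith [pow_pos hδ0 2, pow_pos hδ0 3, pow_pos hδ0 4]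
    have a2 : 3 / 4 - δ / 2 - δ ^ 2 ≤ √((1 - 1 / 4) * (1 - (1 / 4 + δ))) := by
      apply Real.le_sqrt_of_sq_le
      nlinarith [pow_pos hδ0 2, pow_pos hδ0 3, pow_pos hδ0 4]
    linarith
  have bcn : 1 / 2 ≤ (∑ i, √(binVec m (1 / 4) i * binVec m (1 / 4 + δ) i)) ^ n := by
    have a1 := one_add_mul_le_pow (a := -(2 * δ ^ 2)) (by nlinarith) n
    have a2 : (1 + -(2 * δ ^ 2)) ^ n ≤ (∑ i, √(binVec m (1 / 4) i * binVec m (1 / 4 + δ) i)) ^ n := by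
      apply pow_le_pow_left₀ (by nlinarith); linarith
    nlinarith
  have hent : 2 / 5 * δ ≤ |entropy (binVec m (1 / 4)) - entropy (binVec m (1 / 4 + δ))| := by
    rw [abs_sub_comm]
    refine le_trans ?_ (le_abs_self _)
    rw [binVec_entropy, binVec_entropy]
    have g1 := gibbs_aux (p := 1 / 4) (q := 1 / 4 + δ) (by norm_num) (by linarith)
    have g2 := gibbs_aux (p := 1 - 1 / 4) (q := 1 - (1 / 4 + δ)) (by norm_num) (by linarith)
    have l1 : 2 / 5 ≤ Real.log (1 / (1 / 4 + δ)) - Real.log (1 / (1 - (1 / 4 + δ))) := by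
      rw [← Real.log_div (by positivity) (one_div_ne_zero (by linarith))]
      have : 1 - (1 / (1 / 4 + δ) / (1 / (1 - (1 / 4 + δ))))⁻¹ ≤ _ :=
        Real.one_sub_inv_le_log_of_pos (by
          have : 0 < 1 - (1 / 4 + δ) := by linarith
          positivity)
      refine le_trans ?_ this
      have h3 : 0 < 1 - (1 / 4 + δ) := by linarith
      have : (1 / (1 / 4 + δ) / (1 / (1 - (1 / 4 + δ))))⁻¹ = (1 / 4 + δ) / (1 - (1 / 4 + δ)) := by
        simp [div_eq_mul_inv, mul_comm]
      rw [this]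
      have : (1 / 4 + δ) / (1 - (1 / 4 + δ)) ≤ 3 / 5 := by
        rw [div_le_iff₀ h3]; linarith
      linarith
    have := mul_le_mul_of_nonneg_left l1 hδ0.le
    linarith
  have : 1 / 2 * (2 / 5 * δ) ≤ (∑ i, √(binVec m (1 / 4) i * binVec m (1 / 4 + δ) i)) ^ n *
      |entropy (binVec m (1 / 4)) - entropy (binVec m (1 / 4 + δ))| := by gcongr
  linarith


lemma fact_bound {n : ℕ} (hn : 1 ≤ n) :
    (n.factorial : ℝ) * Real.exp n ≤ Real.exp 1 * n * (n : ℝ) ^ n := by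
  induction n, hn using Nat.le_induction with
  | base => simp
  | succ n hn ih =>
    have hn' : (0 : ℝ) < n := by positivity
    have h1 : Real.exp 1 * (n : ℝ) ^ (n + 1) ≤ ((n : ℝ) + 1) ^ (n + 1) := by
      have : Real.exp 1 ≤ (((n : ℝ) + 1) / n) ^ (n + 1) := by
        rw [← Real.exp_log (show 0 < ((n : ℝ) + 1) / n by positivity), ← Real.exp_nat_mul,
          Real.exp_le_exp]
        have := Real.one_sub_inv_le_log_of_pos (show 0 < ((n : ℝ) + 1) / n by positivity)
        have h2 : 1 - (((n : ℝ) + 1) / n)⁻¹ = 1 / (n + 1) := by field_simp; ring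
        rw [h2] at this
        push_cast
        calc (1 : ℝ) = (n + 1) * (1 / (n + 1)) := by field_simp
          _ ≤ _ := by gcongr
      rwa [div_pow, le_div_iff₀ (by positivity)] at this
    rw [Nat.factorial_succ]
    push_cast
    rw [Real.exp_add]
    have he : 0 < Real.exp 1 := Real.exp_pos 1
    calc ((n : ℝ) + 1) * n.factorial * (Real.exp n * Real.exp 1)
        = (n + 1) * Real.exp 1 * (n.factorial * Real.exp n) := by ring
      _ ≤ (n + 1) * Real.exp 1 * (Real.exp 1 * n * (n : ℝ) ^ n) := by gcongr
      _ = (n + 1) * Real.exp 1 * (Real.exp 1 * (n : ℝ) ^ (n + 1)) := by ring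
      _ ≤ (n + 1) * Real.exp 1 * (((n : ℝ) + 1) ^ (n + 1)) := by gcongr
      _ = _ := by ring

lemma exp_rem {x : ℝ} (hx : 0 ≤ x) (s : ℕ) :
    |Real.exp (-x) - ∑ i ∈ Finset.range s, (-x) ^ i / i.factorial| ≤
      x ^ s / s.factorial * Real.exp x := by
  have hs : ∀ z : ℝ, HasSum (fun i : ℕ => z ^ i / (i.factorial : ℝ)) (Real.exp z) := by
    intro z
    have := NormedSpace.expSeries_div_hasSum_exp (𝔸 := ℝ) z
    rwa [← Real.exp_eq_exp_ℝ] at this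
  have h1 := (hs (-x))
  have h2 := (hs x)
  have e : Real.exp (-x) - ∑ i ∈ Finset.range s, (-x) ^ i / i.factorial =
      ∑' i, (-x) ^ (i + s) / ((i + s).factorial : ℝ) := by
    rw [← h1.tsum_eq, ← h1.summable.sum_add_tsum_nat_add s]; ring
  rw [e, ← Real.norm_eq_abs]
  have hR : HasSum (fun i : ℕ => x ^ s / s.factorial * (x ^ i / (i.factorial : ℝ)))
    (x ^ s / s.factorial * Real.exp x) := h2.mul_left _
  apply tsum_of_norm_bounded hR
  intro i
  rw [Real.norm_eq_abs, abs_div, abs_pow, abs_neg, abs_of_nonneg hx,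
    abs_of_nonneg (by positivity : (0 : ℝ) ≤ ((i + s).factorial : ℝ)), div_mul_div_comm, ← pow_add,
    add_comm s i]
  apply div_le_div_of_nonneg_left (by positivity) (by positivity)
  have : s.factorial * i.factorial ≤ (i + s).factorial := by
    rw [mul_comm]
    exact Nat.le_of_dvd (Nat.factorial_pos _) (Nat.factorial_mul_factorial_dvd_factorial_add i s)
  exact_mod_cast this

lemma tail_bound {X ρ : ℝ} {R t s : ℕ} (hX0 : 0 ≤ X) (hρ : 0 < ρ) (hρ1 : ρ ≤ 1)
    (hX : 2 * X * Real.exp 1 ≤ ρ * R) (hts : R ≤ t + s) :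
    X ^ t / t.factorial * (X ^ s / s.factorial) ≤ ρ ^ R := by
  set τ := t + s with hτ
  have h1 : X ^ t / t.factorial * (X ^ s / s.factorial) ≤ (2 * X) ^ τ / τ.factorial := by
    have hc : (τ.choose t : ℝ) ≤ 2 ^ τ := by exact_mod_cast Nat.choose_le_two_pow τ t
    have hc2 : (τ.choose t : ℝ) * (t.factorial * s.factorial) = τ.factorial := by
      have := Nat.choose_mul_factorial_mul_factorial (show t ≤ τ by omega)
      rw [show τ - t = s by omega] at this
      rw [← mul_assoc]
      exact_mod_cast this
    rw [div_mul_div_comm, ← pow_add, ← hτ, mul_pow, div_le_div_iff₀ (by positivity) (by positivity),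
      ← hc2]
    calc X ^ τ * ((τ.choose t : ℝ) * (t.factorial * s.factorial))
        ≤ X ^ τ * (2 ^ τ * (t.factorial * s.factorial)) := by gcongr
      _ = _ := by ring
  have h2 : 2 * X ≤ ρ / Real.exp 1 * τ := by
    have : (R : ℝ) ≤ τ := by exact_mod_cast hts
    rw [div_mul_eq_mul_div, le_div_iff₀ (Real.exp_pos 1)]
    exact hX.trans (by gcongr)
  calc _ ≤ (2 * X) ^ τ / τ.factorial := h1
    _ ≤ (ρ / Real.exp 1 * τ) ^ τ / τ.factorial := by gcongr
    _ = (ρ / Real.exp 1) ^ τ * ((τ : ℝ) ^ τ / τ.factorial) := by rw [mul_pow]; ring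
    _ ≤ (ρ / Real.exp 1) ^ τ * Real.exp τ := by
        gcongr
        exact Real.pow_div_factorial_le_exp _ (by positivity) τ
    _ = ρ ^ τ := by
        rw [div_pow, ← Real.exp_nat_mul, mul_one]
        have := Real.exp_ne_zero (τ : ℝ)
        field_simp
    _ ≤ ρ ^ R := pow_le_pow_of_le_one hρ.le hρ1 hts

lemma poisson_close {J : Type*} [Fintype J] (p q x : J → ℝ) (hp : ∀ j, 0 ≤ p j) (hq : ∀ j, 0 ≤ q j)
    (hp1 : ∑ j, p j = 1) (hq1 : ∑ j, q j = 1) {X ρ : ℝ} {R : ℕ} (hx0 : ∀ j, 0 ≤ x j)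
    (hxX : ∀ j, x j ≤ X) (hX0 : 0 ≤ X) (hρ : 0 < ρ) (hρ1 : ρ ≤ 1)
    (hX : 2 * X * Real.exp 1 ≤ ρ * R)
    (hm : ∀ t, t ≤ R → ∑ j, p j * x j ^ t = ∑ j, q j * x j ^ t) (t : ℕ) :
    |∑ j, p j * (Real.exp (- x j) * x j ^ t / t.factorial) -
      ∑ j, q j * (Real.exp (- x j) * x j ^ t / t.factorial)| ≤ 2 * Real.exp X * ρ ^ R := by
  set s := R - t with hs
  set T : ℝ → ℝ := fun y => ∑ i ∈ Finset.range s, (-y) ^ i / i.factorial with hT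
  have hpoly : ∑ j, p j * (T (x j) * x j ^ t / t.factorial) =
      ∑ j, q j * (T (x j) * x j ^ t / t.factorial) := by
    have expand : ∀ w : J → ℝ, ∑ j, w j * (T (x j) * x j ^ t / t.factorial) =
        ∑ i ∈ Finset.range s, ((-1) ^ i / i.factorial / t.factorial) * ∑ j, w j * x j ^ (i + t) := by
      intro w
      simp_rw [hT, Finset.sum_mul, Finset.sum_div, Finset.mul_sum]
      rw [Finset.sum_comm]
      apply Finset.sum_congr rfl; intro i _
      apply Finset.sum_congr rfl; intro j _
      rw [neg_pow (x j), pow_add]; ring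
    rw [expand p, expand q]
    apply Finset.sum_congr rfl
    intro i hi
    have := Finset.mem_range.1 hi
    rw [hm (i + t) (by omega)]
  have hterm : ∀ j, |(Real.exp (- x j) * x j ^ t / t.factorial) - (T (x j) * x j ^ t / t.factorial)| ≤
      Real.exp X * ρ ^ R := by
    intro j
    have h0 := hx0 j
    have e : (Real.exp (- x j) * x j ^ t / t.factorial) - (T (x j) * x j ^ t / t.factorial) =
      (x j ^ t / t.factorial) * (Real.exp (- x j) - T (x j)) := by ring
    rw [e, abs_mul, abs_of_nonneg (by positivity)]
    calc _ ≤ (x j ^ t / t.factorial) * (x j ^ s / s.factorial * Real.exp (x j)) := by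
          gcongr
          exact exp_rem h0 s
      _ ≤ (X ^ t / t.factorial) * (X ^ s / s.factorial * Real.exp X) := by
          have := hxX j
          gcongr
      _ = Real.exp X * (X ^ t / t.factorial * (X ^ s / s.factorial)) := by ring
      _ ≤ _ := by
          gcongr
          exact tail_bound hX0 hρ hρ1 hX (by omega)
  have hone : ∀ w : J → ℝ, (∀ j, 0 ≤ w j) → ∑ j, w j = 1 →
      |∑ j, w j * (Real.exp (- x j) * x j ^ t / t.factorial) -
        ∑ j, w j * (T (x j) * x j ^ t / t.factorial)| ≤ Real.exp X * ρ ^ R := by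
    intro w hw hw1
    rw [← Finset.sum_sub_distrib]
    calc _ ≤ ∑ j, |w j * (Real.exp (- x j) * x j ^ t / t.factorial) -
          w j * (T (x j) * x j ^ t / t.factorial)| := Finset.abs_sum_le_sum_abs _ _
      _ ≤ ∑ j, w j * (Real.exp X * ρ ^ R) := by
          apply Finset.sum_le_sum; intro j _
          rw [← mul_sub, abs_mul, abs_of_nonneg (hw j)]
          exact mul_le_mul_of_nonneg_left (hterm j) (hw j)
      _ = _ := by rw [← Finset.sum_mul, hw1, one_mul]
  have a := hone p hp hp1
  have b := hone q hq hq1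
  rw [hpoly] at a
  rw [abs_le] at a b ⊢
  constructor <;> linarith [a.1, a.2, b.1, b.2]


/-- Unnormalised random vector. -/
def qv {T : Type*} {m : ℕ} (α : ℝ) (v : T → ℝ) (θ : Fin m → T) : Fin (m + 1) → ℝ :=
  Fin.cons (1 - α) (fun i => v (θ i))

/-- Total mass of the unnormalised random vector. -/
def sv {T : Type*} {m : ℕ} (α : ℝ) (v : T → ℝ) (θ : Fin m → T) : ℝ :=
  1 - α + ∑ i, v (θ i)

/-- Normalised vector. -/
def Pv {T : Type*} {m : ℕ} (α : ℝ) (v : T → ℝ) (θ : Fin m → T) : Fin (m + 1) → ℝ :=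
  fun i => qv α v θ i / sv α v θ

/-- Weight. -/
def wv (n : ℕ) (s : ℝ) : ℝ := (s * Real.exp (1 - s)) ^ n

lemma sum_qv {T : Type*} {m : ℕ} (α : ℝ) (v : T → ℝ) (θ : Fin m → T) :
    ∑ i, qv α v θ i = sv α v θ := by
  simp [qv, sv, Fin.sum_univ_succ]

lemma wv_identity {k n : ℕ} (hn : 1 ≤ n) (q : Fin k → ℝ) (s : ℝ) (hs : 0 < s) (hq : ∑ i, q i = s)
    {N : Fin k → ℕ} (hN : N ∈ Finset.piAntidiag Finset.univ n) :
    wv n s * multinomialPMF n (fun i => q i / s) N =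
      (n.factorial * Real.exp n / (n : ℝ) ^ n) *
        ∏ i, (Real.exp (-(n * q i)) * (n * q i) ^ (N i) / (N i).factorial) := by
  have hsum : ∑ i, N i = n := (Finset.mem_piAntidiag.1 hN).1
  have hn' : (0 : ℝ) < n := by positivity
  rw [multinomialPMF_eq hN]
  have e1 : ∏ i, (Real.exp (-(n * q i)) * (n * q i) ^ (N i) / (N i).factorial) =
      Real.exp (-(n * s)) * ((n : ℝ) ^ n * ∏ i, q i ^ N i) / ∏ i, ((N i).factorial : ℝ) := by
    rw [Finset.prod_div_distrib, Finset.prod_mul_distrib, ← Real.exp_sum]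
    simp_rw [mul_pow]
    rw [Finset.prod_mul_distrib, Finset.prod_pow_eq_pow_sum, hsum, Finset.sum_neg_distrib,
      ← Finset.mul_sum, hq]
  have e2 : ∏ i, (q i / s) ^ N i = (∏ i, q i ^ N i) / s ^ n := by
    simp_rw [div_pow]
    rw [Finset.prod_div_distrib, Finset.prod_pow_eq_pow_sum, hsum]
  have e3 : wv n s = s ^ n * (Real.exp n * Real.exp (-(n * s))) := by
    unfold wv
    rw [mul_pow, ← Real.exp_nat_mul, ← Real.exp_add]
    ring_nf
  rw [e1, e2, e3]
  have : ∏ i, ((N i).factorial : ℝ) ≠ 0 := Finset.prod_ne_zero_iff.2 (fun i _ => by positivity)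
  field_simp

/-- Mixture of Poisson probability weights. -/
def mixg {T : Type*} [Fintype T] (n : ℕ) (v p : T → ℝ) (t : ℕ) : ℝ :=
  ∑ j, p j * (Real.exp (-(n * v j)) * (n * v j) ^ t / t.factorial)

lemma mix_identity {T : Type*} [Fintype T] {m n : ℕ} (hn : 1 ≤ n) (α : ℝ) (v p : T → ℝ)
    (hs : ∀ θ : Fin m → T, 0 < sv α v θ)
    {N : Fin (m + 1) → ℕ} (hN : N ∈ Finset.piAntidiag Finset.univ n) :
    ∑ θ : Fin m → T, ((∏ i, p (θ i)) * wv n (sv α v θ)) * multinomialPMF n (Pv α v θ) N =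
      (n.factorial * Real.exp n / (n : ℝ) ^ n) *
      ((Real.exp (-(n * (1 - α))) * (n * (1 - α)) ^ (N 0) / (N 0).factorial) *
        ∏ i : Fin m, mixg n v p (N i.succ)) := by
  unfold mixg
  rw [← sum_pi_prod (fun (i : Fin m) j =>
    p j * (Real.exp (-(n * v j)) * (n * v j) ^ (N i.succ) / (N i.succ).factorial)),
    Finset.mul_sum, Finset.mul_sum]
  apply Finset.sum_congr rfl
  intro θ _
  rw [mul_assoc, show Pv α v θ = fun i => qv α v θ i / sv α v θ from rfl,
    wv_identity hn _ _ (hs θ) (sum_qv α v θ) hN, Fin.prod_univ_succ, Finset.prod_mul_distrib]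
  simp only [qv, Fin.cons_zero, Fin.cons_succ]
  ring

lemma poisson_row {x : ℝ} (hx : 0 ≤ x) (n : ℕ) :
    ∑ t : Fin n, Real.exp (-x) * x ^ (t : ℕ) / ((t : ℕ).factorial : ℝ) ≤ 1 := by
  have h := Real.sum_le_exp_of_nonneg hx n
  rw [Fin.sum_univ_eq_sum_range (fun t => Real.exp (-x) * x ^ t / (t.factorial : ℝ))]
  simp_rw [mul_div_assoc]
  rw [← Finset.mul_sum]
  calc _ ≤ Real.exp (-x) * Real.exp x := by gcongr
    _ = 1 := by rw [← Real.exp_add]; simp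

lemma mixg_nonneg {T : Type*} [Fintype T] (n : ℕ) (v p : T → ℝ) (hv : ∀ j, 0 ≤ v j)
    (hp : ∀ j, 0 ≤ p j) (t : ℕ) : 0 ≤ mixg n v p t := by
  apply Finset.sum_nonneg
  intro j _
  have := hv j
  have := hp j
  positivity

lemma mixg_row {T : Type*} [Fintype T] (n N : ℕ) (v p : T → ℝ) (hv : ∀ j, 0 ≤ v j)
    (hp : ∀ j, 0 ≤ p j) (hp1 : ∑ j, p j = 1) : ∑ t : Fin N, mixg n v p t ≤ 1 := by
  unfold mixg
  rw [Finset.sum_comm, ← hp1]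
  apply Finset.sum_le_sum
  intro j _
  rw [← Finset.mul_sum]
  have h := poisson_row (x := n * v j) (by have := hv j; positivity) N
  calc _ ≤ p j * 1 := mul_le_mul_of_nonneg_left h (hp j)
    _ = p j := mul_one _

lemma tv_bound {T : Type*} [Fintype T] {m n : ℕ} (hn : 1 ≤ n) {α : ℝ} (hα : α ≤ 1) (v p q : T → ℝ)
    (hs : ∀ θ : Fin m → T, 0 < sv α v θ) (hv : ∀ j, 0 ≤ v j)
    (hp : ∀ j, 0 ≤ p j) (hq : ∀ j, 0 ≤ q j) (hp1 : ∑ j, p j = 1) (hq1 : ∑ j, q j = 1)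
    {δ : ℝ} (hδ : ∀ t, |mixg n v p t - mixg n v q t| ≤ δ) :
    ∑ N ∈ (Finset.piAntidiag Finset.univ n : Finset (Fin (m + 1) → ℕ)),
      |∑ θ : Fin m → T, ((∏ i, p (θ i)) * wv n (sv α v θ)) * multinomialPMF n (Pv α v θ) N -
       ∑ θ : Fin m → T, ((∏ i, q (θ i)) * wv n (sv α v θ)) * multinomialPMF n (Pv α v θ) N| ≤
    Real.exp 1 * n * (m * ((n + 1) * δ)) := by
  have hn' : (0 : ℝ) < n := by positivity
  set A := (n.factorial * Real.exp n / (n : ℝ) ^ n) with hA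
  have hA0 : 0 ≤ A := by positivity
  have hA1 : A ≤ Real.exp 1 * n := by
    rw [hA, div_le_iff₀ (by positivity)]; exact fact_bound hn
  have h1α : 0 ≤ 1 - α := by linarith
  set u : ℕ → ℝ := fun t => Real.exp (-(n * (1 - α))) * (n * (1 - α)) ^ t / t.factorial with hu
  have hu0 : ∀ t, 0 ≤ u t := fun t => by simp only [hu]; positivity
  set g : (T → ℝ) → Fin (m + 1) → ℕ → ℝ := fun p => Fin.cons u (fun _ => mixg n v p) with hg
  have hgp : ∀ (p : T → ℝ) (N : Fin (m + 1) → ℕ),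
      u (N 0) * ∏ i : Fin m, mixg n v p (N i.succ) = ∏ i, g p i (N i) := by
    intro p N
    rw [Fin.prod_univ_succ]
    simp [hg]
  have hg0 : ∀ (p : T → ℝ), (∀ j, 0 ≤ p j) → ∀ i t, 0 ≤ g p i t := by
    intro p hp i t
    refine Fin.cases ?_ (fun i => ?_) i
    · simpa [hg] using hu0 t
    · simpa [hg] using mixg_nonneg n v p hv hp t
  have hg1 : ∀ (p : T → ℝ), (∀ j, 0 ≤ p j) → ∑ j, p j = 1 →
      ∀ i, ∑ t : Fin (n + 1), g p i t ≤ 1 := by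
    intro p hp hp1 i
    refine Fin.cases ?_ (fun i => ?_) i
    · simpa [hg] using poisson_row (x := n * (1 - α)) (by positivity) (n + 1)
    · simpa [hg] using mixg_row n (n + 1) v p hv hp hp1
  calc _ = ∑ N ∈ (Finset.piAntidiag Finset.univ n : Finset (Fin (m + 1) → ℕ)),
        A * |∏ i, g p i (N i) - ∏ i, g q i (N i)| := by
        apply Finset.sum_congr rfl
        intro N hN
        rw [mix_identity hn α v p hs hN, mix_identity hn α v q hs hN, ← hgp, ← hgp, ← mul_sub,
          abs_mul, abs_of_nonneg hA0]
    _ ≤ A * ∑ N : Fin (m + 1) → Fin (n + 1), |∏ i, g p i (N i) - ∏ i, g q i (N i)| := by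
        rw [← Finset.mul_sum]
        gcongr
        exact antidiag_sum_le (fun N => |∏ i, g p i (N i) - ∏ i, g q i (N i)|)
          (fun N => abs_nonneg _)
    _ ≤ A * ∑ i, ∑ t : Fin (n + 1), |g p i t - g q i t| := by
        gcongr
        exact tv_prod (fun i (t : Fin (n + 1)) => g p i t) (fun i (t : Fin (n + 1)) => g q i t)
          (fun i t => hg0 p hp i t) (fun i t => hg0 q hq i t) (hg1 p hp hp1) (hg1 q hq hq1)
    _ ≤ A * (m * ((n + 1) * δ)) := by
        gcongr
        rw [Fin.sum_univ_succ]
        have e0 : ∑ t : Fin (n + 1), |g p 0 t - g q 0 t| = 0 := by simp [hg]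
        rw [e0, zero_add]
        calc _ ≤ ∑ i : Fin m, ∑ t : Fin (n + 1), δ := by
              apply Finset.sum_le_sum; intro i _
              apply Finset.sum_le_sum; intro t _
              simpa [hg] using hδ t
          _ = _ := by simp
    _ ≤ _ := by
        have : 0 ≤ δ := (abs_nonneg _).trans (hδ 0)
        gcongr

lemma wv_le_one {n : ℕ} {s : ℝ} (hs : 0 < s) : wv n s ≤ 1 := by
  unfold wv
  apply pow_le_one₀ (by positivity)
  have h1 : s ≤ Real.exp (s - 1) := by linarith [Real.add_one_le_exp (s - 1)]
  calc s * Real.exp (1 - s) ≤ Real.exp (s - 1) * Real.exp (1 - s) := by gcongr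
    _ = 1 := by rw [← Real.exp_add]; simp

lemma wv_nonneg {n : ℕ} {s : ℝ} (hs : 0 < s) : 0 ≤ wv n s := by
  unfold wv; positivity

lemma wv_ge {n : ℕ} {s : ℝ} (hs : 1 / 2 ≤ s) : 1 - 2 * n * (s - 1) ^ 2 ≤ wv n s := by
  have hs0 : 0 < s := by linarith
  have e : wv n s = Real.exp (n * (Real.log s + (1 - s))) := by
    unfold wv
    rw [Real.exp_nat_mul, Real.exp_add, Real.exp_log hs0]
  rw [e]
  have h1 := Real.add_one_le_exp (n * (Real.log s + (1 - s)))
  have h2 : -(2 * (s - 1) ^ 2) ≤ Real.log s + (1 - s) := by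
    have := Real.one_sub_inv_le_log_of_pos hs0
    have h3 : 1 - s⁻¹ + (1 - s) = -((s - 1) ^ 2 / s) := by field_simp; ring
    have h4 : (s - 1) ^ 2 / s ≤ 2 * (s - 1) ^ 2 := by
      rw [div_le_iff₀ hs0]; nlinarith [sq_nonneg (s - 1)]
    linarith
  have h3 : (n : ℝ) * -(2 * (s - 1) ^ 2) ≤ n * (Real.log s + (1 - s)) := by gcongr
  linarith

lemma Z_ge {T : Type*} [Fintype T] {m n : ℕ} {α : ℝ} (v p : T → ℝ)
    (hs : ∀ θ : Fin m → T, 1 / 2 ≤ sv α v θ)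
    (hp : ∀ j, 0 ≤ p j) (hp1 : ∑ j, p j = 1) {V : ℝ}
    (hV : ∑ θ : Fin m → T, (∏ i, p (θ i)) * (sv α v θ - 1) ^ 2 ≤ V) (hnV : 2 * n * V ≤ 1 / 2) :
    1 / 2 ≤ ∑ θ : Fin m → T, (∏ i, p (θ i)) * wv n (sv α v θ) := by
  calc (1 : ℝ) / 2 ≤ 1 - 2 * n * V := by linarith
    _ ≤ 1 - 2 * n * ∑ θ : Fin m → T, (∏ i, p (θ i)) * (sv α v θ - 1) ^ 2 := by gcongr
    _ = ∑ θ : Fin m → T, (∏ i, p (θ i)) * (1 - 2 * n * (sv α v θ - 1) ^ 2) := by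
        have h1 := sum_pi_one (m := m) p hp1
        simp_rw [mul_sub, mul_one, Finset.sum_sub_distrib]
        rw [h1, Finset.mul_sum]
        congr 1
        exact Finset.sum_congr rfl (fun _ _ => by ring)
    _ ≤ _ := by
        apply Finset.sum_le_sum
        intro θ _
        exact mul_le_mul_of_nonneg_left (wv_ge (hs θ)) (Finset.prod_nonneg (fun i _ => hp _))

lemma Z_le {T : Type*} [Fintype T] {m n : ℕ} {α : ℝ} (v p : T → ℝ)
    (hs : ∀ θ : Fin m → T, 1 / 2 ≤ sv α v θ)
    (hp : ∀ j, 0 ≤ p j) (hp1 : ∑ j, p j = 1) :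
    ∑ θ : Fin m → T, (∏ i, p (θ i)) * wv n (sv α v θ) ≤ 1 := by
  rw [← sum_pi_one (m := m) p hp1]
  apply Finset.sum_le_sum
  intro θ _
  exact mul_le_of_le_one_right (Finset.prod_nonneg (fun i _ => hp _))
    (wv_le_one (by linarith [hs θ]))

lemma sv_var {T : Type*} [Fintype T] {m : ℕ} {α : ℝ} (v p : T → ℝ)
    (hp1 : ∑ j, p j = 1) (hv1 : m * ∑ j, p j * v j = α) :
    ∑ θ : Fin m → T, (∏ i, p (θ i)) * (sv α v θ - 1) ^ 2 ≤ m * ∑ j, p j * v j ^ 2 := by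
  have := var_pi_le (m := m) p v hp1 _ rfl
  rw [hv1] at this
  convert this using 4
  unfold sv; ring

lemma entropy_Pv {T : Type*} {m : ℕ} {α : ℝ} (v : T → ℝ) (θ : Fin m → T) (hs : 0 < sv α v θ)
    (hv : ∀ j, 0 ≤ v j) (hα : α < 1) :
    entropy (Pv α v θ) =
      ((1 - α) * Real.log (1 / (1 - α)) + ∑ i, v (θ i) * Real.log (1 / v (θ i))) / sv α v θ
        + Real.log (sv α v θ) := by
  have h1 : ∀ x : ℝ, 0 ≤ x → x / sv α v θ * Real.log (1 / (x / sv α v θ)) =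
      (x * Real.log (1 / x)) / sv α v θ + x / sv α v θ * Real.log (sv α v θ) := by
    intro x hx
    rcases hx.eq_or_lt with rfl | hx
    · simp
    rw [show 1 / (x / sv α v θ) = (1 / x) * sv α v θ by field_simp,
      Real.log_mul (by positivity) hs.ne']
    ring
  unfold entropy Pv
  rw [Fin.sum_univ_succ]
  simp only [qv, Fin.cons_zero, Fin.cons_succ]
  rw [h1 _ (by linarith), Finset.sum_congr rfl (fun i _ => h1 _ (hv (θ i)))]
  rw [Finset.sum_add_distrib, ← Finset.sum_mul, ← Finset.sum_div, ← Finset.sum_div]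
  have h2 : (1 - α) / sv α v θ + (∑ i, v (θ i)) / sv α v θ = 1 := by
    rw [← add_div]; exact div_self hs.ne'
  linear_combination Real.log (sv α v θ) * h2

lemma H_dev {s Φ h : ℝ} (hs : 1 / 2 ≤ s) :
    (Φ / s + Real.log s - h) ^ 2 ≤ 12 * ((Φ - h) ^ 2 + (h ^ 2 + 1) * (s - 1) ^ 2) := by
  have hs0 : 0 < s := by linarith
  have hlog : (Real.log s) ^ 2 ≤ 4 * (s - 1) ^ 2 := by
    have h1 := Real.one_sub_inv_le_log_of_pos hs0
    have h2 := Real.log_le_sub_one_of_pos hs0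
    have h3 : |Real.log s| ≤ 2 * |s - 1| := by
      rw [abs_le]
      have h4 : 1 - s⁻¹ = (s - 1) / s := by field_simp
      have h5 : |(s - 1) / s| ≤ 2 * |s - 1| := by
        rw [abs_div, abs_of_pos hs0, div_le_iff₀ hs0]; nlinarith [abs_nonneg (s - 1)]
      have h6 := neg_abs_le ((s - 1) / s)
      have h7 := le_abs_self (s - 1)
      have := abs_nonneg (s - 1)
      constructor <;> linarith
    calc (Real.log s) ^ 2 = |Real.log s| ^ 2 := (sq_abs _).symm
      _ ≤ (2 * |s - 1|) ^ 2 := by gcongr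
      _ = _ := by rw [mul_pow, sq_abs]; norm_num
  have hi : ∀ x : ℝ, (x / s) ^ 2 ≤ 4 * x ^ 2 := by
    intro x
    rw [div_pow, div_le_iff₀ (by positivity)]
    have : 1 / 4 ≤ s ^ 2 := by nlinarith
    nlinarith [sq_nonneg x]
  have e : Φ / s + Real.log s - h = (Φ - h) / s + Real.log s + (-(h * (s - 1))) / s := by
    field_simp; ring
  rw [e]
  have h1 := hi (Φ - h)
  have h2 := hi (-(h * (s - 1)))
  set a := (Φ - h) / s
  set b := Real.log s
  set c := (-(h * (s - 1))) / s
  nlinarith [sq_nonneg (a - b), sq_nonneg (a - c), sq_nonneg (b - c)]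


lemma var_H {T : Type*} [Fintype T] {m n : ℕ} {α L W : ℝ} (v p : T → ℝ)
    (hs : ∀ θ : Fin m → T, 1 / 2 ≤ sv α v θ) (hv : ∀ j, 0 ≤ v j) (hα0 : 0 ≤ α) (hα : α < 1)
    (hp : ∀ j, 0 ≤ p j) (hp1 : ∑ j, p j = 1) (hv1 : m * ∑ j, p j * v j = α) (hL1 : 1 ≤ L)
    (hL : ∀ j, 0 ≤ v j * Real.log (1 / v j) ∧ v j * Real.log (1 / v j) ≤ L * v j)
    (hW : m * ∑ j, p j * v j ^ 2 ≤ W) (h : ℝ)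
    (hh : h = (1 - α) * Real.log (1 / (1 - α)) + m * ∑ j, p j * (v j * Real.log (1 / v j))) :
    ∑ θ : Fin m → T, ((∏ i, p (θ i)) * wv n (sv α v θ)) * (entropy (Pv α v θ) - h) ^ 2 ≤
      72 * L ^ 2 * W := by
  have hsv := sv_var (m := m) (α := α) v p hp1 hv1
  have hΦ := var_pi_le (m := m) p (fun j => v j * Real.log (1 / v j)) hp1 _ rfl
  have hΦ2 : m * ∑ j, p j * (v j * Real.log (1 / v j)) ^ 2 ≤ L ^ 2 * W := by
    calc _ ≤ m * ∑ j, L ^ 2 * (p j * v j ^ 2) := by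
          refine mul_le_mul_of_nonneg_left (Finset.sum_le_sum fun j _ => ?_) (by positivity)
          have h1 := pow_le_pow_left₀ (hL j).1 (hL j).2 2
          calc _ ≤ p j * (L * v j) ^ 2 := mul_le_mul_of_nonneg_left h1 (hp j)
            _ = _ := by ring
      _ = L ^ 2 * (m * ∑ j, p j * v j ^ 2) := by rw [← Finset.mul_sum]; ring
      _ ≤ _ := by gcongr
  have hφ := phi_bounds (x := 1 - α) (by linarith) (by linarith)
  have hh0 : 0 ≤ h := by
    rw [hh]
    have : 0 ≤ ∑ j, p j * (v j * Real.log (1 / v j)) :=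
      Finset.sum_nonneg (fun j _ => mul_nonneg (hp j) (hL j).1)
    have := hφ.1
    positivity
  have hh1 : h ≤ 1 + L := by
    rw [hh]
    have : m * ∑ j, p j * (v j * Real.log (1 / v j)) ≤ L * (m * ∑ j, p j * v j) := by
      calc _ ≤ m * ∑ j, L * (p j * v j) := by
            refine mul_le_mul_of_nonneg_left (Finset.sum_le_sum fun j _ => ?_) (by positivity)
            calc _ ≤ p j * (L * v j) := mul_le_mul_of_nonneg_left (hL j).2 (hp j)
              _ = _ := by ring
        _ = _ := by rw [← Finset.mul_sum]; ring
    rw [hv1] at this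
    nlinarith [hφ.2]
  have hh2 : h ^ 2 + 1 ≤ 5 * L ^ 2 := by nlinarith
  have hprod : ∀ θ : Fin m → T, 0 ≤ ∏ i, p (θ i) := fun θ => Finset.prod_nonneg (fun i _ => hp _)
  calc _ ≤ ∑ θ : Fin m → T, (12 * ((∏ i, p (θ i)) * (∑ i, v (θ i) * Real.log (1 / v (θ i)) -
            m * ∑ j, p j * (v j * Real.log (1 / v j))) ^ 2) +
            12 * (h ^ 2 + 1) * ((∏ i, p (θ i)) * (sv α v θ - 1) ^ 2)) := by
        apply Finset.sum_le_sum
        intro θ _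
        have hs0 : 0 < sv α v θ := by linarith [hs θ]
        have h1 := H_dev (Φ := (1 - α) * Real.log (1 / (1 - α)) +
          ∑ i, v (θ i) * Real.log (1 / v (θ i))) (h := h) (hs θ)
        rw [← entropy_Pv v θ hs0 hv hα] at h1
        have e : (1 - α) * Real.log (1 / (1 - α)) + ∑ i, v (θ i) * Real.log (1 / v (θ i)) - h =
          ∑ i, v (θ i) * Real.log (1 / v (θ i)) - m * ∑ j, p j * (v j * Real.log (1 / v j)) := by
          rw [hh]; ring
        rw [e] at h1
        calc _ ≤ (∏ i, p (θ i)) * (entropy (Pv α v θ) - h) ^ 2 := by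
              apply mul_le_mul_of_nonneg_right _ (sq_nonneg _)
              exact mul_le_of_le_one_right (hprod θ) (wv_le_one hs0)
          _ ≤ _ := mul_le_mul_of_nonneg_left h1 (hprod θ)
          _ = _ := by ring
    _ = 12 * ∑ θ : Fin m → T, (∏ i, p (θ i)) * (∑ i, v (θ i) * Real.log (1 / v (θ i)) -
            m * ∑ j, p j * (v j * Real.log (1 / v j))) ^ 2 +
          12 * (h ^ 2 + 1) * ∑ θ : Fin m → T, (∏ i, p (θ i)) * (sv α v θ - 1) ^ 2 := by
        rw [Finset.sum_add_distrib, ← Finset.mul_sum, ← Finset.mul_sum]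
    _ ≤ 12 * (L ^ 2 * W) + 12 * (5 * L ^ 2) * W := by
        have hS0 : 0 ≤ ∑ θ : Fin m → T, (∏ i, p (θ i)) * (sv α v θ - 1) ^ 2 :=
          Finset.sum_nonneg (fun θ _ => mul_nonneg (hprod θ) (sq_nonneg _))
        gcongr
        · exact hΦ.trans hΦ2
        · exact hsv.trans hW
    _ = _ := by ring

/-- Abstract core: two priors on the same atoms. -/
lemma core_abs {T : Type*} [Fintype T] {m n : ℕ} (hn : 1 ≤ n) {α L W δ Δ : ℝ} (v p q : T → ℝ)
    (hv : ∀ j, 0 ≤ v j) (hα0 : 0 ≤ α) (hα : α ≤ 1 / 2)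
    (hp : ∀ j, 0 ≤ p j) (hp1 : ∑ j, p j = 1) (hvp : m * ∑ j, p j * v j = α)
    (hq : ∀ j, 0 ≤ q j) (hq1 : ∑ j, q j = 1) (hvq : m * ∑ j, q j * v j = α) (hL1 : 1 ≤ L)
    (hL : ∀ j, 0 ≤ v j * Real.log (1 / v j) ∧ v j * Real.log (1 / v j) ≤ L * v j)
    (hWp : m * ∑ j, p j * v j ^ 2 ≤ W) (hWq : m * ∑ j, q j * v j ^ 2 ≤ W)
    (hδ : ∀ t, |mixg n v p t - mixg n v q t| ≤ δ)
    (hδ4 : Real.exp 1 * n * (m * ((n + 1) * δ)) ≤ 1 / 4)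
    (hnW : 2 * n * W ≤ 1 / 2)
    (hΔ0 : 0 ≤ Δ) (hΔ : Δ ≤ m * (∑ j, p j * (v j * Real.log (1 / v j)) -
      ∑ j, q j * (v j * Real.log (1 / v j))))
    (hV : 8 * (72 * L ^ 2 * W) ≤ Δ ^ 2 / 8) :
    Δ ^ 2 / 64 ≤ Rstar (m + 1) n := by
  have hs : ∀ θ : Fin m → T, 1 / 2 ≤ sv α v θ := by
    intro θ
    have : 0 ≤ ∑ i, v (θ i) := Finset.sum_nonneg (fun i _ => hv _)
    unfold sv; linarith
  have hs0 : ∀ θ : Fin m → T, 0 < sv α v θ := fun θ => by linarith [hs θ]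
  have hmem : ∀ θ : Fin m → T, Pv α v θ ∈ probVec (m + 1) := by
    intro θ
    constructor
    · intro i
      apply div_nonneg _ (hs0 θ).le
      refine Fin.cases ?_ (fun i => ?_) i
      · simp only [qv, Fin.cons_zero]; linarith
      · simpa only [qv, Fin.cons_succ] using hv _
    · unfold Pv
      rw [← Finset.sum_div, sum_qv]
      exact div_self (hs0 θ).ne'
  apply Rstar_lower
  intro est
  by_contra hcon
  push Not at hcon
  have hprod : ∀ (p : T → ℝ) (_ : ∀ j, 0 ≤ p j) (θ : Fin m → T),
      0 ≤ (∏ i, p (θ i)) * wv n (sv α v θ) := fun p hp θ =>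
    mul_nonneg (Finset.prod_nonneg (fun i _ => hp _)) (wv_nonneg (hs0 θ))
  have hΘ : Nonempty (Fin m → T) := by
    by_contra hne
    rw [not_nonempty_iff] at hne
    have := sum_pi_one (m := m) p hp1
    simp at this
  -- a strict gain is obtained through the maximum of finitely many risks
  obtain ⟨θ₀, -, hmax⟩ := Finset.exists_max_image (Finset.univ : Finset (Fin m → T))
    (fun θ => mseIID n (Pv α v θ) est) Finset.univ_nonempty
  set r := mseIID n (Pv α v θ₀) est with hr
  have hrlt : r < Δ ^ 2 / 64 := hcon _ (hmem θ₀)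
  have hr0 : 0 ≤ r := by
    rw [hr, mse_eq]
    exact Finset.sum_nonneg (fun N _ => mul_nonneg (multinomialPMF_nonneg (hmem θ₀).1 N)
      (sq_nonneg _))
  have key := lecam (Finset.piAntidiag Finset.univ n : Finset (Fin (m + 1) → ℕ))
    (fun (θ : Fin m → T) N => multinomialPMF n (Pv α v θ) N)
    (fun θ N _ => multinomialPMF_nonneg (hmem θ).1 N)
    (fun θ => by rw [pmf_sum, (hmem θ).2, one_pow])
    (fun θ => entropy (Pv α v θ)) est
    (fun θ => (∏ i, p (θ i)) * wv n (sv α v θ)) (fun θ => (∏ i, q (θ i)) * wv n (sv α v θ))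
    (hprod p hp) (hprod q hq) _ _ r (72 * L ^ 2 * W) (72 * L ^ 2 * W) _
    (fun θ => by
      have := hmax θ (Finset.mem_univ θ)
      rw [mse_eq] at this
      exact this)
    (Z_le v p hs hp hp1) (Z_le v q hs hq hq1)
    (Z_ge v p hs hp hp1 ((sv_var v p hp1 hvp).trans hWp) hnW) hr0
    (var_H v p hs hv hα0 (by linarith) hp hp1 hvp hL1 hL hWp _ rfl)
    (var_H v q hs hv hα0 (by linarith) hq hq1 hvq hL1 hL hWq _ rfl)
    (tv_bound hn (by linarith) v p q hs0 hv hp hq hp1 hq1 hδ) hδ4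
  have e : (1 - α) * Real.log (1 / (1 - α)) + m * ∑ j, p j * (v j * Real.log (1 / v j)) -
      ((1 - α) * Real.log (1 / (1 - α)) + m * ∑ j, q j * (v j * Real.log (1 / v j))) =
      m * (∑ j, p j * (v j * Real.log (1 / v j)) - ∑ j, q j * (v j * Real.log (1 / v j))) := by
    ring
  rw [e] at key
  have := pow_le_pow_left₀ hΔ0 hΔ 2
  linarith


set_option maxHeartbeats 1600000 in
lemma core_num {T : Type*} [Fintype T] {m n R : ℕ} {ε C α k ℓ c0 : ℝ} (hk : k = m + 1)
    (hℓ : ℓ = Real.log k) (hε : 0 < ε) (hε1 : ε ≤ 1) (hC : 1 ≤ C)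
    (hc0 : c0 = ε * Real.exp (-8) / 16) (hk48 : 48 ≤ k) (hℓ1 : 1 ≤ ℓ) (hkc : 1 ≤ c0 * k)
    (hk3 : 2654208 * C ^ 2 * ℓ ^ 3 ≤ ε ^ 2 * k) (hR1 : ℓ ≤ R) (hR2 : R ≤ 2 * ℓ)
    (hn : 1 ≤ n) (hnk : (n : ℝ) ≤ k ^ 2) (hα0 : 0 < α) (hαc : α ≤ c0)
    (hnα : n * α * ℓ ≤ c0 * k) (hαk : c0 ≤ α * k ^ 2)
    (p q τ : T → ℝ) (hp : ∀ j, 0 ≤ p j) (hq : ∀ j, 0 ≤ q j) (hp1 : ∑ j, p j = 1)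
    (hq1 : ∑ j, q j = 1) (hτ : ∀ j, τ j = 0 ∨ ε ≤ τ j) (hτR : ∀ j, τ j ≤ ε + (R : ℝ) ^ 2)
    (hpτ : ∑ j, p j * τ j = ε) (hqτ : ∑ j, q j * τ j = ε)
    (hpτ2 : ∑ j, p j * τ j ^ 2 ≤ 9 * R) (hqτ2 : ∑ j, q j * τ j ^ 2 ≤ 9 * R)
    (hmom : ∀ t, t ≤ R + 1 → ∑ j, p j * τ j ^ t = ∑ j, q j * τ j ^ t)
    (hgap : ε / C ≤ ∑ j, p j * (τ j * Real.log (1 / τ j)) - ∑ j, q j * (τ j * Real.log (1 / τ j))) :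
    1 / (64 * C ^ 2) * α ^ 2 ≤ Rstar (m + 1) n := by
  have hk0 : 0 < k := by linarith
  have hm0 : (0 : ℝ) < m := by linarith
  have hkm : k ≤ 2 * m := by linarith
  have hmk : (m : ℝ) ≤ k := by linarith
  have hη0 : 0 < Real.exp (-8) := Real.exp_pos _
  have hη1 : Real.exp (-8) ≤ 1 := Real.exp_le_one_iff.2 (by norm_num)
  have hc0p : 0 < c0 := by rw [hc0]; positivity
  have hc0ε : 16 * c0 ≤ ε := by rw [hc0]; linarith [mul_le_of_le_one_right hε.le hη1]
  have hn' : (1 : ℝ) ≤ n := by exact_mod_cast hn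
  have hRp : (1 : ℝ) ≤ R := by linarith
  have hnαR : n * α * R ≤ 4 * c0 * m := by
    calc n * α * R ≤ n * α * (2 * ℓ) := by gcongr
      _ = 2 * (n * α * ℓ) := by ring
      _ ≤ 2 * (c0 * (2 * m)) := by
          have : c0 * k ≤ c0 * (2 * m) := by gcongr
          linarith
      _ = _ := by ring
  obtain ⟨b, hb⟩ : ∃ b, b = α / (ε * m) := ⟨_, rfl⟩
  have hb0 : 0 < b := by rw [hb]; positivity
  have hmb : m * b * ε = α := by rw [hb]; field_simp
  have hτ0 : ∀ j, 0 ≤ τ j := fun j => by rcases hτ j with h | h <;> linarith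
  have hτR2 : ∀ j, τ j ≤ 2 * (R : ℝ) ^ 2 := fun j => by nlinarith [hτR j]
  have hk3' : 2654208 * ℓ ^ 3 ≤ k := by
    have h1 : 2654208 * ℓ ^ 3 ≤ 2654208 * C ^ 2 * ℓ ^ 3 := by
      have h3 : (1 : ℝ) ≤ C ^ 2 := one_le_pow₀ hC
      have h4 : 1 * ℓ ^ 3 ≤ C ^ 2 * ℓ ^ 3 := by gcongr
      linarith
    have h2 : ε ^ 2 * k ≤ k := mul_le_of_le_one_left hk0.le (pow_le_one₀ hε.le hε1)
    linarith
  have hv1 : ∀ j, b * τ j ≤ 1 := by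
    intro j
    calc b * τ j ≤ b * (2 * (R : ℝ) ^ 2) := by gcongr; exact hτR2 j
      _ = α * (2 * (R : ℝ) ^ 2) / (ε * m) := by rw [hb]; ring
      _ ≤ 1 := by
          rw [div_le_one (by positivity)]
          calc α * (2 * (R : ℝ) ^ 2) ≤ (ε / 16) * (2 * (2 * ℓ) ^ 2) := by
                gcongr; linarith
            _ = ε * (ℓ ^ 2 / 2) := by ring
            _ ≤ ε * m := by
                gcongr
                have h3 : ℓ ^ 2 ≤ ℓ ^ 3 := pow_le_pow_right₀ hℓ1 (by norm_num)
                have h4 : 0 ≤ ℓ ^ 2 := sq_nonneg ℓ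
                linarith
  have key := core_abs (m := m) hn (α := α) (L := 4 * ℓ) (W := 9 * α ^ 2 * R / (ε ^ 2 * m))
    (δ := 2 * Real.exp (n * b * (2 * (R : ℝ) ^ 2)) * (Real.exp (-7)) ^ R) (Δ := α / C)
    (fun j => b * τ j) p q
    (fun j => mul_nonneg hb0.le (hτ0 j)) hα0.le (by linarith) hp hp1
    (by simp_rw [mul_left_comm]; rw [← Finset.mul_sum, hpτ, ← mul_assoc, hmb]) hq hq1
    (by simp_rw [mul_left_comm]; rw [← Finset.mul_sum, hqτ, ← mul_assoc, hmb]) (by linarith)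
    ?_ ?_ ?_ ?_ ?_ ?_ (by positivity) ?_ ?_
  · calc _ = (α / C) ^ 2 / 64 := by field_simp
      _ ≤ _ := key
  · intro j
    rcases hτ j with h | h
    · simp [h]
    · have hvp : 0 < b * τ j := mul_pos hb0 (by linarith)
      refine ⟨(phi_bounds hvp.le (hv1 j)).1, ?_⟩
      rw [mul_comm]
      gcongr
      rw [hℓ, show 4 * Real.log k = Real.log (k ^ 4) by rw [Real.log_pow]; norm_num]
      apply Real.log_le_log (by positivity)
      rw [div_le_iff₀ hvp]
      calc (1 : ℝ) ≤ c0 * k := hkc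
        _ ≤ α * k ^ 2 * k := by gcongr
        _ = k ^ 3 * (m * (b * ε)) := by rw [← hmb]; ring
        _ ≤ k ^ 3 * (k * (b * τ j)) := by gcongr
        _ = _ := by ring
  · calc _ = m * b ^ 2 * ∑ j, p j * τ j ^ 2 := by
          rw [Finset.mul_sum, Finset.mul_sum]
          exact Finset.sum_congr rfl (fun _ _ => by ring)
      _ ≤ m * b ^ 2 * (9 * R) := by gcongr
      _ = _ := by rw [hb]; field_simp
  · calc _ = m * b ^ 2 * ∑ j, q j * τ j ^ 2 := by
          rw [Finset.mul_sum, Finset.mul_sum]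
          exact Finset.sum_congr rfl (fun _ _ => by ring)
      _ ≤ m * b ^ 2 * (9 * R) := by gcongr
      _ = _ := by rw [hb]; field_simp
  · intro t
    refine poisson_close p q (fun j => n * (b * τ j)) hp hq hp1 hq1 (fun j => ?_) (fun j => ?_)
      (by positivity) (Real.exp_pos _) (Real.exp_le_one_iff.2 (by norm_num)) ?_ ?_ t
    · have := hτ0 j; positivity
    · rw [← mul_assoc]; gcongr; exact hτR2 j
    · have h1 : n * b * (2 * (R : ℝ) ^ 2) ≤ Real.exp (-8) / 2 * R := by
        calc n * b * (2 * (R : ℝ) ^ 2) = (n * α * R) * (2 * R / (ε * m)) := by rw [hb]; ring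
          _ ≤ (4 * c0 * m) * (2 * R / (ε * m)) := by gcongr
          _ = _ := by rw [hc0]; field_simp; ring
      have h2 : Real.exp (-8) * Real.exp 1 = Real.exp (-7) := by
        rw [← Real.exp_add]; norm_num
      calc _ ≤ 2 * (Real.exp (-8) / 2 * R) * Real.exp 1 := by gcongr
        _ = (Real.exp (-8) * Real.exp 1) * R := by ring
        _ = _ := by rw [h2]
    · intro t ht
      have e : ∀ p : T → ℝ, ∑ j, p j * (n * (b * τ j)) ^ t = (n * b) ^ t * ∑ j, p j * τ j ^ t := by
        intro p
        rw [Finset.mul_sum]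
        exact Finset.sum_congr rfl (fun _ _ => by ring)
      rw [e, e, hmom t (by omega)]
  · have h1 : n * b * (2 * (R : ℝ) ^ 2) ≤ R := by
      calc n * b * (2 * (R : ℝ) ^ 2) = (n * α * R) * (2 * R / (ε * m)) := by rw [hb]; ring
        _ ≤ (4 * c0 * m) * (2 * R / (ε * m)) := by gcongr
        _ = (8 * c0 / ε) * R := by field_simp; ring
        _ ≤ 1 * R := by
            gcongr
            rw [div_le_one hε]; linarith
        _ = R := one_mul _
    have h2 : Real.exp (n * b * (2 * (R : ℝ) ^ 2)) * (Real.exp (-7)) ^ R ≤ 1 / k ^ 6 := by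
      rw [← Real.exp_nat_mul, ← Real.exp_add]
      calc _ ≤ Real.exp (-(6 * ℓ)) := by
            apply Real.exp_le_exp.2; linarith
        _ = 1 / k ^ 6 := by
            rw [Real.exp_neg, hℓ, show 6 * Real.log k = Real.log (k ^ 6) by
              rw [Real.log_pow]; norm_num, Real.exp_log (by positivity), one_div]
    have h3 : Real.exp 1 ≤ 3 := by linarith [Real.exp_one_lt_d9]
    calc _ = Real.exp 1 * n * (m * ((n + 1) * (2 *
          (Real.exp (n * b * (2 * (R : ℝ) ^ 2)) * (Real.exp (-7)) ^ R)))) := by ring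
      _ ≤ 3 * k ^ 2 * (k * ((k ^ 2 + k ^ 2) * (2 * (1 / k ^ 6)))) := by
          gcongr
          exact one_le_pow₀ (by linarith)
      _ = 12 / k := by field_simp; ring
      _ ≤ 1 / 4 := by rw [div_le_iff₀ hk0]; linarith
  · calc 2 * n * (9 * α ^ 2 * R / (ε ^ 2 * m)) = (n * α * R) * (18 * α / (ε ^ 2 * m)) := by ring
      _ ≤ (4 * c0 * m) * (18 * c0 / (ε ^ 2 * m)) := by gcongr
      _ = 72 * c0 ^ 2 / ε ^ 2 := by field_simp; ring
      _ ≤ 1 / 2 := by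
          rw [div_le_iff₀ (by positivity)]
          nlinarith
  · have e : ∀ p : T → ℝ, ∑ j, p j * τ j = ε → ∑ j, p j * (b * τ j * Real.log (1 / (b * τ j))) =
        b * ∑ j, p j * (τ j * Real.log (1 / τ j)) + b * Real.log (1 / b) * ε := by
      intro p hpτ
      rw [← hpτ, Finset.mul_sum, Finset.mul_sum, ← Finset.sum_add_distrib]
      apply Finset.sum_congr rfl
      intro j _
      rcases (hτ0 j).eq_or_lt with h | h
      · simp [← h]
      · rw [show 1 / (b * τ j) = (1 / b) * (1 / τ j) by field_simp,
          Real.log_mul (by positivity) (by positivity)]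
        ring
    rw [e p hpτ, e q hqτ]
    calc α / C = m * b * (ε / C) := by rw [← hmb]; ring
      _ ≤ m * b * (∑ j, p j * (τ j * Real.log (1 / τ j)) -
            ∑ j, q j * (τ j * Real.log (1 / τ j))) := by gcongr
      _ = _ := by ring
  · rw [div_pow, div_div, mul_div_assoc', mul_div_assoc', div_le_div_iff₀ (by positivity)
      (by positivity)]
    calc 8 * (72 * (4 * ℓ) ^ 2 * (9 * α ^ 2 * R)) * (C ^ 2 * 8)
        ≤ 8 * (72 * (4 * ℓ) ^ 2 * (9 * α ^ 2 * (2 * ℓ))) * (C ^ 2 * 8) := by gcongr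
      _ = α ^ 2 * ((2654208 * C ^ 2 * ℓ ^ 3) / 2) := by ring
      _ ≤ α ^ 2 * (ε ^ 2 * m) := by
          gcongr
          have : ε ^ 2 * k ≤ ε ^ 2 * (2 * m) := by gcongr
          linarith

lemma core : ∃ c0 c : ℝ, ∃ K0 : ℕ, 0 < c0 ∧ 0 < c ∧ ∀ k n : ℕ, K0 ≤ k → 1 ≤ n →
    (1 : ℝ) ≤ Real.log k ∧ ((n : ℝ) ≤ (k : ℝ) ^ 2 →
    ∀ α : ℝ, 0 < α → α ≤ c0 → n * α * Real.log k ≤ c0 * k → c0 ≤ α * (k : ℝ) ^ 2 →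
      c * α ^ 2 ≤ Rstar k n) := by
  obtain ⟨ε, C, hε, hε1, hC, hprior⟩ := prior_lemma
  set c0 := ε * Real.exp (-8) / 16 with hc0
  have hc0p : 0 < c0 := by positivity
  have hev : ∀ᶠ x : ℝ in Filter.atTop, 2654208 * C ^ 2 * Real.log x ^ 3 ≤ ε ^ 2 * x := by
    have h := (Real.isLittleO_pow_log_id_atTop (n := 3)).def
      (show 0 < ε ^ 2 / (2654208 * C ^ 2) by positivity)
    filter_upwards [h, Filter.eventually_ge_atTop (1 : ℝ)] with x hx hx1
    have hl : 0 ≤ Real.log x := Real.log_nonneg hx1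
    rw [Real.norm_of_nonneg (by positivity), id, Real.norm_of_nonneg (by linarith)] at hx
    calc 2654208 * C ^ 2 * Real.log x ^ 3
        ≤ 2654208 * C ^ 2 * (ε ^ 2 / (2654208 * C ^ 2) * x) := by gcongr
      _ = _ := by field_simp
  have hev2 : ∀ᶠ x : ℝ in Filter.atTop, 48 ≤ x ∧ 1 ≤ Real.log x ∧ 1 ≤ c0 * x ∧
      2654208 * C ^ 2 * Real.log x ^ 3 ≤ ε ^ 2 * x := by
    filter_upwards [hev, Filter.eventually_ge_atTop (48 : ℝ),
      Filter.eventually_ge_atTop (1 / c0), Real.tendsto_log_atTop.eventually_ge_atTop 1]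
      with x h1 h2 h3 h4
    refine ⟨h2, h4, ?_, h1⟩
    rw [div_le_iff₀ hc0p] at h3; linarith
  obtain ⟨K0, hK0⟩ := Filter.eventually_atTop.1 (tendsto_natCast_atTop_atTop.eventually hev2)
  refine ⟨c0, 1 / (64 * C ^ 2), K0, hc0p, by positivity, ?_⟩
  intro k n hk hn
  obtain ⟨hk48, hℓ1, hkc, hk3⟩ := hK0 k hk
  refine ⟨hℓ1, ?_⟩
  intro hnk α hα0 hαc hnα hαk
  have hk1 : 1 ≤ k := by
    have : (1 : ℝ) ≤ k := by linarith
    exact_mod_cast this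
  obtain ⟨m, rfl⟩ : ∃ m, k = m + 1 := ⟨k - 1, by omega⟩
  set R := ⌈Real.log ((m + 1 : ℕ) : ℝ)⌉₊ with hR
  have hR1 : Real.log ((m + 1 : ℕ) : ℝ) ≤ R := Nat.le_ceil _
  have hR2 : (R : ℝ) < Real.log ((m + 1 : ℕ) : ℝ) + 1 := Nat.ceil_lt_add_one (by linarith)
  have hR3 : 1 ≤ R := by
    have : (1 : ℝ) ≤ R := by linarith
    exact_mod_cast this
  obtain ⟨p, q, τ, h1, h2, h3, h4, h5, h6, h7, h8, h9, h10, h11, h12⟩ := hprior R hR3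
  exact core_num (k := ((m + 1 : ℕ) : ℝ)) (by push_cast; ring) rfl hε hε1 hC hc0 hk48 hℓ1 hkc hk3 hR1
    (by linarith) hn hnk hα0 hαc hnα hαk p q τ h1 h2 h3 h4 h5 h6 h7 h8 h9 h10 h11 h12


/-- minimax lower bound `R*(k,n) ≳ (k/(n log k))² ∨ 1`. -/
theorem minimax_lower_bias :
    ∃ c c' : ℝ, 0 < c ∧ 0 < c' ∧
      ∀ k n : ℕ, 2 ≤ k → 1 ≤ n →
        ((k : ℝ) / Real.log k ≤ (n : ℝ) →
          c * ((k : ℝ) / (n * Real.log k)) ^ 2 ≤ Rstar k n) ∧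
        ((n : ℝ) ≤ (k : ℝ) / Real.log k → c' ≤ Rstar k n) := by
  obtain ⟨c0, c, K0, hc0, hc, hcore⟩ := core
  refine ⟨min (c * c0 ^ 2) (1 / (6400 * 4 * ((K0 : ℝ) + 1) ^ 2)),
    min (c * c0 ^ 2) (1 / (6400 * (2 * ((K0 : ℝ) + 1)))), by positivity, by positivity, ?_⟩
  intro k n hk hn
  have hk' : (2 : ℝ) ≤ k := by exact_mod_cast hk
  have hn' : (1 : ℝ) ≤ n := by exact_mod_cast hn
  have hl2 : (1 : ℝ) / 2 ≤ Real.log k :=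
    le_trans (by linarith [Real.log_two_gt_d9]) (Real.log_le_log (by norm_num) hk')
  have hl0 : 0 < Real.log k := by linarith
  have hlk : Real.log k ≤ k := (Real.log_le_sub_one_of_pos (by linarith)).trans (by linarith)
  have hinv := Rstar_inv_n hk hn
  have hK1 : (1 : ℝ) ≤ K0 + 1 := by linarith [Nat.cast_nonneg (α := ℝ) K0]
  constructor
  · intro h
    rw [div_le_iff₀ hl0] at h
    by_cases hkK : K0 ≤ k
    · obtain ⟨hl1, hmain⟩ := hcore k n hkK hn
      by_cases hnk : (n : ℝ) ≤ (k : ℝ) ^ 2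
      · have h1 := hmain hnk (c0 * (k / (n * Real.log k))) (by positivity)
          (mul_le_of_le_one_right hc0.le ((div_le_one (by positivity)).2 h))
          (by apply le_of_eq; field_simp)
          (by
            rw [mul_assoc]
            apply le_mul_of_one_le_right hc0.le
            rw [div_mul_eq_mul_div, le_div_iff₀ (by positivity), one_mul]
            calc (n : ℝ) * Real.log k ≤ (k : ℝ) ^ 2 * k := by gcongr
              _ = _ := by ring)
        calc _ ≤ c * c0 ^ 2 * ((k : ℝ) / (n * Real.log k)) ^ 2 := by
              gcongr; exact min_le_left _ _
          _ = c * (c0 * (k / (n * Real.log k))) ^ 2 := by ring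
          _ ≤ _ := h1
      · push Not at hnk
        refine le_trans ?_ hinv
        calc _ ≤ (1 / 6400) * ((k : ℝ) / (n * 1)) ^ 2 := by
              gcongr
              refine (min_le_right _ _).trans ?_
              apply one_div_le_one_div_of_le (by norm_num)
              nlinarith
          _ = (k : ℝ) ^ 2 / (6400 * n ^ 2) := by field_simp
          _ ≤ n / (6400 * n ^ 2) := by gcongr
          _ = _ := by field_simp
    · push Not at hkK
      have hkK' : (k : ℝ) ≤ K0 + 1 := by
        have : (k : ℝ) < K0 := by exact_mod_cast hkK
        linarith
      refine le_trans ?_ hinv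
      calc _ ≤ 1 / (6400 * 4 * ((K0 : ℝ) + 1) ^ 2) * (((K0 : ℝ) + 1) / (n * (1 / 2))) ^ 2 := by
            gcongr; exact min_le_right _ _
        _ = 1 / (6400 * (n : ℝ) ^ 2) := by field_simp; norm_num
        _ ≤ _ := by
            gcongr
            exact le_self_pow₀ hn' (by norm_num)
  · intro h
    by_cases hkK : K0 ≤ k
    · obtain ⟨hl1, hmain⟩ := hcore k n hkK hn
      have h2 : (n : ℝ) ≤ k := h.trans (div_le_self (by linarith) hl1)
      rw [le_div_iff₀ hl0] at h
      have h1 := hmain (by nlinarith) c0 hc0 le_rfl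
        (by
          calc (n : ℝ) * c0 * Real.log k = c0 * (n * Real.log k) := by ring
            _ ≤ _ := by gcongr)
        (le_mul_of_one_le_right hc0.le (one_le_pow₀ (by linarith)))
      exact (min_le_left _ _).trans h1
    · push Not at hkK
      have hkK' : (k : ℝ) ≤ K0 + 1 := by
        have : (k : ℝ) < K0 := by exact_mod_cast hkK
        linarith
      refine (min_le_right _ _).trans (le_trans ?_ hinv)
      gcongr
      refine h.trans ?_
      rw [div_le_iff₀ hl0]
      nlinarith
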